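/- arXiv:2208.07154 — 3 statements merged into one kernel-verified Lean document; each statement's English description precedes it below -/
import Mathlib

section
/- With θ = 0.8234, for every n ∈ ℕ, every function f : W → ℂ of bounded variation, and every w ∈ W one has |U^n f(w) − ∫_W f dQ∞| ≤ θ^n · var f. -/
open Real MeasureTheory Filter Set
open scoped ENNReal NNReal Classical

namespace OCF

/-- The golden ratio `G = (1+√5)/2`. -/
noncomputable def G : ℝ := (1 + Real.sqrt 5) / 2

/-- `g = (√5-1)/2`. -/
noncomputable def gg : ℝ := (Real.sqrt 5 - 1) / 2

/-- The map `u : W × X → W` of the RSCC; `uF w e i = u(w,(e,i))`. -/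
noncomputable def uF (w : ℝ) (e i : ℤ) : ℝ :=
  if e = 1 then 1 / (i + w)
  else if w < gg ^ 2 then 1 / (i - w) else 1 / (i - gg ^ 2)

/-- The probabilities `P : W × X → [0,∞)` of the RSCC; `PF w e i = P(w,(e,i))`. -/
noncomputable def PF (w : ℝ) (e i : ℤ) : ℝ :=
  if w < gg ^ 2 then
    (1 - w ^ 2) * (2 - (if i = 1 then 1 else 0)) /
      (2 * ((i : ℝ) - 1 + (if i = 1 then 1 else 0) + (e : ℝ) * w) * ((i : ℝ) + 1 + (e : ℝ) * w))
  else
    (1 + w) * (2 - (if i = 1 then 1 else 0)) * (if e = 1 then 1 else 0) /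
      (((i : ℝ) - 1 + (if i = 1 then 1 else 0) + w) * ((i : ℝ) + 1 + w))

/-- The transition probability function
`Q(w,B) = Σ_{(e,i) ∈ X : u(w,(e,i)) ∈ B} P(w,(e,i))`, where odd `i` is written as `2m+1`. -/
noncomputable def Qf (w : ℝ) (B : Set ℝ) : ℝ :=
  ∑' m : ℕ, ((if uF w 1 (2 * (m : ℤ) + 1) ∈ B then PF w 1 (2 * (m : ℤ) + 1) else 0)
           + (if uF w (-1) (2 * (m : ℤ) + 1) ∈ B then PF w (-1) (2 * (m : ℤ) + 1) else 0))

/-- The stationary probability measure `Q∞` on `W = [0,G]`. -/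
noncomputable def Qinf : Measure ℝ :=
  (volume.restrict (Set.Icc (0 : ℝ) G)).withDensity
    (fun w => ENNReal.ofReal ((3 * Real.log G)⁻¹ *
      (if w < gg ^ 2 then 1 / (1 + w) + 1 / (1 - w) else 1 / (1 + w))))

/-- The transition operator `U` of the Markov chain: `Uf(w) = Σ_{(e,i)} P(w,(e,i)) f(u(w,(e,i)))`. -/
noncomputable def U (f : ℝ → ℂ) : ℝ → ℂ := fun w =>
  ∑' m : ℕ, ((PF w 1 (2 * (m : ℤ) + 1) : ℂ) * f (uF w 1 (2 * (m : ℤ) + 1))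
           + (PF w (-1) (2 * (m : ℤ) + 1) : ℂ) * f (uF w (-1) (2 * (m : ℤ) + 1)))

/-- The `n`-step transition probability, as a measure-valued kernel: `Qiter 1 w = Q(w,·)` and
`Qiter (n+1) w B = ∫_W Qiter n w' B Q(w,dw')` (the transition measure `Q(w,·)` being purely
atomic with atom `u(w,(e,i))` of mass `P(w,(e,i))`). -/
noncomputable def Qiter : ℕ → ℝ → Measure ℝ
  | 0 => fun w => Measure.dirac w
  | n + 1 => fun w => Measure.sum (fun m : ℕ =>
      ENNReal.ofReal (PF w 1 (2 * (m : ℤ) + 1)) • Qiter n (uF w 1 (2 * (m : ℤ) + 1)) +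
      ENNReal.ofReal (PF w (-1) (2 * (m : ℤ) + 1)) • Qiter n (uF w (-1) (2 * (m : ℤ) + 1)))

end OCF

namespace OCF

/-- `q = g²`. -/
noncomputable def q : ℝ := gg ^ 2

lemma q_sq : q ^ 2 = 3 * q - 1 := by
  have h : Real.sqrt 5 ^ 2 = 5 := Real.sq_sqrt (by norm_num)
  have h4 : Real.sqrt 5 ^ 4 = 25 := by
    have : Real.sqrt 5 ^ 4 = (Real.sqrt 5 ^ 2) ^ 2 := by ring
    rw [this, h]; norm_num
  have h3 : Real.sqrt 5 ^ 3 = 5 * Real.sqrt 5 := by rw [pow_succ, h]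
  unfold q gg
  ring_nf
  rw [h4, h3, h]; ring

lemma G_eq : G = 2 - q := by
  have h : Real.sqrt 5 ^ 2 = 5 := Real.sq_sqrt (by norm_num)
  unfold q gg G
  ring_nf
  rw [h]; ring

lemma q_lo : 0.3819 < q := by
  have h : Real.sqrt 5 < 2.2361 := by
    rw [Real.sqrt_lt' (by norm_num)]; norm_num
  have := G_eq
  unfold G at this
  linarith

lemma q_hi : q < 0.382 := by
  have h : 2.236 < Real.sqrt 5 := by
    rw [Real.lt_sqrt (by norm_num)]; norm_num
  have := G_eq
  unfold G at this
  linarith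

lemma one_div_one_sub_q : 1 / (1 - q) = G := by
  have := q_sq; have := q_hi
  rw [G_eq, div_eq_iff (by linarith)]; nlinarith

lemma one_div_three_sub_q : 1 / (3 - q) = q := by
  have := q_sq; have := q_hi
  rw [div_eq_iff (by linarith)]; nlinarith

/-- coefficients -/
noncomputable def cK (s : ℝ) (m : ℕ) : ℝ :=
  if m = 0 then 1 / (2 + s) else 2 * (1 + s) / ((2 * m + s) * (2 * m + 2 + s))

/-- points -/
noncomputable def pt (s : ℝ) (m : ℕ) : ℝ := 1 / (2 * m + 1 + s)

/-- the basic operator -/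
noncomputable def K (f : ℝ → ℝ) (s : ℝ) : ℝ := ∑' m : ℕ, cK s m * f (pt s m)

lemma cK_zero (s : ℝ) : cK s 0 = 1 / (2 + s) := by simp [cK]

lemma cK_succ (s : ℝ) (m : ℕ) :
    cK s (m + 1) = 2 * (1 + s) / ((2 * m + 2 + s) * (2 * m + 4 + s)) := by
  simp only [cK, Nat.succ_ne_zero, if_false]; push_cast; congr 1; ring

lemma cK_nonneg {s : ℝ} (hs : -1 < s) (m : ℕ) : 0 ≤ cK s m := by
  cases m with
  | zero => rw [cK_zero]; apply div_nonneg <;> linarith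
  | succ m =>
    rw [cK_succ]
    have : (0:ℝ) ≤ m := Nat.cast_nonneg m
    apply div_nonneg (by linarith)
    apply mul_nonneg <;> linarith

lemma cK_sum {s : ℝ} (hs : -1 < s) (N : ℕ) :
    ∑ m ∈ Finset.range (N + 1), cK s m = (2 * N + 1) / (2 * N + 2 + s) := by
  induction N with
  | zero => simp [cK_zero]
  | succ N ih =>
    rw [Finset.sum_range_succ, ih, cK_succ]
    have : (0:ℝ) ≤ N := Nat.cast_nonneg N
    have h1 : 2 * (N:ℝ) + 2 + s ≠ 0 := by linarith
    have h2 : 2 * (N:ℝ) + 4 + s ≠ 0 := by linarith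
    have h3 : 2 * ((N:ℝ) + 1) + 2 + s ≠ 0 := by linarith
    push_cast
    rw [div_add_div _ _ h1 (mul_ne_zero h1 h2), div_eq_div_iff (mul_ne_zero h1 (mul_ne_zero h1 h2)) h3]
    ring

lemma cK_hasSum {s : ℝ} (hs : -1 < s) : HasSum (cK s) 1 := by
  rw [hasSum_iff_tendsto_nat_of_nonneg (cK_nonneg hs)]
  rw [← tendsto_add_atTop_iff_nat 1]
  have h : ∀ N : ℕ, ∑ m ∈ Finset.range (N + 1), cK s m
      = 1 - (1 + s) * (2 * (N:ℝ) + 2 + s)⁻¹ := by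
    intro N
    rw [cK_sum hs]
    have : (0:ℝ) ≤ N := Nat.cast_nonneg N
    have h1 : 2 * (N:ℝ) + 2 + s ≠ 0 := by linarith
    rw [div_eq_iff h1, sub_mul, mul_assoc, inv_mul_cancel₀ h1]
    ring
  simp_rw [h]
  have h2 : Tendsto (fun N : ℕ => 2 * (N:ℝ) + 2 + s) atTop atTop := by
    apply tendsto_atTop_add_const_right
    apply tendsto_atTop_add_const_right
    exact Tendsto.const_mul_atTop (by norm_num) tendsto_natCast_atTop_atTop
  have h3 := (h2.inv_tendsto_atTop.const_mul (1 + s)).const_sub 1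
  simpa using h3

lemma pt_mem {s : ℝ} (hs : s ∈ Icc (-q) G) (m : ℕ) : pt s m ∈ Icc 0 G := by
  have h0 : (0:ℝ) ≤ m := Nat.cast_nonneg m
  have := q_hi
  obtain ⟨h1, h2⟩ := hs
  refine ⟨?_, ?_⟩
  · unfold pt; apply div_nonneg <;> linarith
  · rw [← one_div_one_sub_q]; unfold pt
    apply one_div_le_one_div_of_le <;> linarith

lemma pt_anti_s {s t : ℝ} (hs : -1 < s) (hst : s ≤ t) (m : ℕ) : pt t m ≤ pt s m := by
  have h0 : (0:ℝ) ≤ m := Nat.cast_nonneg m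
  unfold pt
  apply one_div_le_one_div_of_le <;> linarith

lemma pt_anti {s : ℝ} (hs : -1 < s) : Antitone (pt s) := by
  intro m n hmn
  have h0 : (0:ℝ) ≤ m := Nat.cast_nonneg m
  have h1 : (m:ℝ) ≤ n := Nat.cast_le.2 hmn
  unfold pt
  apply one_div_le_one_div_of_le <;> linarith

lemma I_gt {s : ℝ} (hs : s ∈ Icc (-q) G) : -1 < s := by
  have := q_hi; have := hs.1; linarith

/-- bounded on W -/
def Bd (f : ℝ → ℝ) : Prop := ∃ M, ∀ w ∈ Icc 0 G, |f w| ≤ M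

lemma G_pos : 0 < G := by rw [G_eq]; have := q_hi; linarith

lemma zero_mem : (0:ℝ) ∈ Icc 0 G := ⟨le_rfl, G_pos.le⟩
lemma G_mem : G ∈ Icc 0 G := ⟨G_pos.le, le_rfl⟩

lemma K_summable {f : ℝ → ℝ} (hf : Bd f) {s : ℝ} (hs : s ∈ Icc (-q) G) :
    Summable (fun m => cK s m * f (pt s m)) := by
  obtain ⟨M, hM⟩ := hf
  refine Summable.of_norm_bounded ((cK_hasSum (I_gt hs)).summable.mul_right M) ?_
  intro m
  rw [norm_mul, Real.norm_of_nonneg (cK_nonneg (I_gt hs) m)]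
  exact mul_le_mul_of_nonneg_left (hM _ (pt_mem hs m)) (cK_nonneg (I_gt hs) m)

lemma K_congr {f f' : ℝ → ℝ} (h : ∀ w ∈ Icc 0 G, f w = f' w) {s : ℝ} (hs : s ∈ Icc (-q) G) :
    K f s = K f' s := by
  unfold K; congr 1; ext m; rw [h _ (pt_mem hs m)]

lemma K_const (k : ℝ) {s : ℝ} (hs : s ∈ Icc (-q) G) : K (fun _ => k) s = k := by
  unfold K; rw [tsum_mul_right, (cK_hasSum (I_gt hs)).tsum_eq, one_mul]

lemma K_comb {f1 f2 f3 : ℝ → ℝ} (h1 : Bd f1) (h2 : Bd f2) (h3 : Bd f3) (k a : ℝ) {s : ℝ}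
    (hs : s ∈ Icc (-q) G) :
    K (fun w => k + f1 w - f2 w + a * f3 w) s = k + K f1 s - K f2 s + a * K f3 s := by
  have e0 := (cK_hasSum (I_gt hs)).mul_right k
  have e1 := (K_summable h1 hs).hasSum
  have e2 := (K_summable h2 hs).hasSum
  have e3 := (K_summable h3 hs).hasSum
  have := ((e0.add e1).sub e2).add (e3.mul_left a)
  rw [one_mul] at this
  unfold K
  rw [← this.tsum_eq]
  congr 1; ext m; ring

/-- monotone, vanishing at `0` -/
def Mz (f : ℝ → ℝ) : Prop := MonotoneOn f (Icc 0 G) ∧ f 0 = 0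

lemma Mz.nonneg {f : ℝ → ℝ} (hf : Mz f) {w : ℝ} (hw : w ∈ Icc 0 G) : 0 ≤ f w := by
  rw [← hf.2]; exact hf.1 zero_mem hw hw.1

lemma Mz.le {f : ℝ → ℝ} (hf : Mz f) {w : ℝ} (hw : w ∈ Icc 0 G) : f w ≤ f G :=
  hf.1 hw G_mem hw.2

lemma Mz.bd {f : ℝ → ℝ} (hf : Mz f) : Bd f :=
  ⟨f G, fun w hw => by rw [abs_of_nonneg (hf.nonneg hw)]; exact hf.le hw⟩

lemma abel_fin (d x : ℕ → ℝ) (hd : ∀ N, 0 ≤ ∑ m ∈ Finset.range (N + 1), d m)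
    (hx : Antitone x) (N : ℕ) :
    (∑ m ∈ Finset.range (N + 1), d m) * x N ≤ ∑ m ∈ Finset.range (N + 1), d m * x m := by
  induction N with
  | zero => simp
  | succ N ih =>
    rw [Finset.sum_range_succ, Finset.sum_range_succ (fun m => d m * x m), add_mul]
    have := mul_le_mul_of_nonneg_left (hx (Nat.le_succ N)) (hd N)
    simp only [Nat.succ_eq_add_one] at this
    linarith

lemma K_anti {f : ℝ → ℝ} (hf : Mz f) : AntitoneOn (K f) (Icc (-q) G) := by
  intro s hs t ht hst
  have hs1 := I_gt hs
  have ht1 := I_gt ht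
  have hsum : Summable (fun m => cK t m * f (pt s m)) := by
    refine Summable.of_norm_bounded ((cK_hasSum ht1).summable.mul_right (f G)) ?_
    intro m
    rw [norm_mul, Real.norm_of_nonneg (cK_nonneg ht1 m),
      Real.norm_of_nonneg (hf.nonneg (pt_mem hs m))]
    exact mul_le_mul_of_nonneg_left (hf.le (pt_mem hs m)) (cK_nonneg ht1 m)
  have h1 : K f t ≤ ∑' m, cK t m * f (pt s m) := by
    refine (K_summable hf.bd ht).tsum_le_tsum (fun m => ?_) hsum
    exact mul_le_mul_of_nonneg_left
      (hf.1 (pt_mem ht m) (pt_mem hs m) (pt_anti_s hs1 hst m)) (cK_nonneg ht1 m)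
  refine h1.trans ?_
  have hd : ∀ N, 0 ≤ ∑ m ∈ Finset.range (N + 1), (cK s m - cK t m) := by
    intro N
    rw [Finset.sum_sub_distrib, cK_sum hs1, cK_sum ht1, sub_nonneg]
    have h0 : (0:ℝ) ≤ N := Nat.cast_nonneg N
    apply div_le_div_of_nonneg_left <;> linarith
  have hx : Antitone (fun m => f (pt s m)) := fun m n hmn =>
    hf.1 (pt_mem hs n) (pt_mem hs m) (pt_anti hs1 hmn)
  have hlim := ((K_summable hf.bd hs).hasSum.sub hsum.hasSum).tendsto_sum_nat
  rw [← sub_nonneg]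
  rw [← tendsto_add_atTop_iff_nat 1] at hlim
  refine ge_of_tendsto' hlim fun N => ?_
  have := abel_fin _ _ hd hx N
  have h2 := mul_nonneg (hd N) (hf.nonneg (pt_mem hs N))
  simp only [sub_mul] at this
  linarith

lemma K_nonneg {f : ℝ → ℝ} (hf : Mz f) {s : ℝ} (hs : s ∈ Icc (-q) G) : 0 ≤ K f s :=
  tsum_nonneg fun m => mul_nonneg (cK_nonneg (I_gt hs) m) (hf.nonneg (pt_mem hs m))

lemma mem_I {w : ℝ} (hw : w ∈ Icc 0 G) : w ∈ Icc (-q) G := by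
  have := q_lo; exact ⟨by linarith [hw.1], hw.2⟩

lemma neg_mem_I {w : ℝ} (h0 : 0 ≤ w) (h1 : w ≤ q) : -w ∈ Icc (-q) G := by
  have := G_pos; exact ⟨by linarith, by linarith⟩

lemma q_mem : q ∈ Icc 0 G := by
  have := q_lo; have := q_hi; have := G_eq; exact ⟨by linarith, by linarith⟩

/-- shared summation estimate -/
lemma key {f : ℝ → ℝ} (hf : Mz f) (x y b0 b1 : ℝ) (hx : 0 ≤ x) (hy : 0 ≤ y) (hb1 : 0 ≤ b1)
    (h0 : x / (2 - q) + y / (2 + q) ≤ b0)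
    (h1 : x * (2 * (1 - q) / ((2 - q) * (4 - q))) + y * (2 * (1 + q) / ((2 + q) * (4 + q)))
      - 1 / (4 - q) ≤ b1)
    (h2 : x * (1 - q) + y * (1 + q) ≤ 3 - q) :
    x * K f (-q) + y * K f q - K f G ≤ (b0 + b1) * f G := by
  have q1 := q_lo
  have q2 := q_hi
  have hG := G_eq
  have hmq : -q ∈ Icc (-q) G := neg_mem_I (by linarith) le_rfl
  have hq := mem_I q_mem
  have hGI := mem_I G_mem
  have hfG : 0 ≤ f G := hf.nonneg G_mem
  set F : ℕ → ℝ := fun m => f (pt (-q) m) with hF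
  have F0 : F 0 = f G := by
    simp only [hF, pt]; rw [← one_div_one_sub_q]; congr 2; push_cast; ring
  have Fn : ∀ m, 0 ≤ F m := fun m => hf.nonneg (pt_mem hmq m)
  have Fl : ∀ m, F m ≤ f G := fun m => hf.le (pt_mem hmq m)
  have s1 : Summable (fun m => cK (-q) m * F m) := K_summable hf.bd hmq
  have s2 : Summable (fun m => cK q m * F m) := by
    refine Summable.of_norm_bounded ((cK_hasSum (I_gt hq)).summable.mul_right (f G)) ?_
    intro m
    rw [norm_mul, Real.norm_of_nonneg (cK_nonneg (I_gt hq) m), Real.norm_of_nonneg (Fn m)]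
    exact mul_le_mul_of_nonneg_left (Fl m) (cK_nonneg (I_gt hq) m)
  have s3 : Summable (fun m => cK G m * f (pt G m)) := K_summable hf.bd hGI
  have e3 : ∀ m, f (pt G m) = F (m + 1) := by
    intro m; simp only [hF, pt]; congr 2; rw [hG]; push_cast; ring
  have k2 : K f q ≤ ∑' m, cK q m * F m := by
    refine (K_summable hf.bd hq).tsum_le_tsum (fun m => ?_) s2
    exact mul_le_mul_of_nonneg_left
      (hf.1 (pt_mem hq m) (pt_mem hmq m) (pt_anti_s (I_gt hmq) (by linarith) m))
      (cK_nonneg (I_gt hq) m)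
  have k1 : K f (-q) = ∑' m, cK (-q) m * F m := rfl
  rw [s1.tsum_eq_zero_add] at k1
  rw [s2.tsum_eq_zero_add] at k2
  have s1' := (summable_nat_add_iff 1).2 s1
  have s2' := (summable_nat_add_iff 1).2 s2
  have hs := ((s1'.hasSum.mul_left x).add (s2'.hasSum.mul_left y)).sub s3.hasSum
  have hb : HasSum (fun m : ℕ => if m = 0 then b1 * f G else 0) (b1 * f G) :=
    hasSum_ite_eq 0 _
  have hle := hasSum_le (fun m => ?_) hs hb
  · have k3 : K f G = ∑' m, cK G m * f (pt G m) := rfl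
    rw [← k3] at hle
    have k2' := mul_le_mul_of_nonneg_left k2 hy
    rw [k1]
    rw [F0, cK_zero] at k2' ⊢
    have h0' := mul_le_mul_of_nonneg_right h0 hfG
    have : x * (1 / (2 + -q) * f G) + y * (1 / (2 + q) * f G)
      = (x / (2 - q) + y / (2 + q)) * f G := by ring
    linarith
  · rw [e3]
    rcases m with _ | m
    · simp only [if_true]
      have : cK G 0 = 1 / (4 - q) := by rw [cK_zero, hG]; congr 1; ring
      rw [this, cK_succ, cK_succ]
      have e : x * (2 * (1 + -q) / ((2 * (0:ℕ) + 2 + -q) * (2 * (0:ℕ) + 4 + -q)) * F (0 + 1)) +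
        y * (2 * (1 + q) / ((2 * (0:ℕ) + 2 + q) * (2 * (0:ℕ) + 4 + q)) * F (0 + 1)) -
        1 / (4 - q) * F (0 + 1) = (x * (2 * (1 - q) / ((2 - q) * (4 - q)))
          + y * (2 * (1 + q) / ((2 + q) * (4 + q))) - 1 / (4 - q)) * F (0 + 1) := by
        push_cast; ring_nf
      rw [e]
      calc _ ≤ b1 * F (0 + 1) := mul_le_mul_of_nonneg_right h1 (Fn _)
        _ ≤ _ := mul_le_mul_of_nonneg_left (Fl _) hb1
    · simp only [Nat.succ_ne_zero, if_false]
      have m0 : (0:ℝ) ≤ m := Nat.cast_nonneg m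
      set D : ℝ := (2 * m + 4 - q) * (2 * m + 6 - q) with hD
      have Dpos : 0 < D := by apply mul_pos <;> linarith
      have c1 : cK (-q) (m + 1 + 1) = 2 * (1 - q) / D := by
        rw [cK_succ, hD]; push_cast; congr 1 ; ring
      have c2 : cK q (m + 1 + 1) ≤ 2 * (1 + q) / D := by
        rw [cK_succ, hD]; push_cast
        apply div_le_div_of_nonneg_left (by linarith) Dpos
        apply mul_le_mul <;> linarith
      have c3 : cK G (m + 1) = 2 * (3 - q) / D := by
        rw [cK_succ, hD, hG]; congr 1 <;> ring
      rw [c1, c3]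
      have c2' := mul_le_mul_of_nonneg_left (mul_le_mul_of_nonneg_right c2 (Fn (m+1+1))) hy
      have e : x * (2 * (1 - q) / D * F (m+1+1)) + y * (2 * (1 + q) / D * F (m+1+1))
        - 2 * (3 - q) / D * F (m+1+1)
        = (x * (1 - q) + y * (1 + q) - (3 - q)) * (2 / D * F (m+1+1)) := by ring
      have : (x * (1 - q) + y * (1 + q) - (3 - q)) * (2 / D * F (m+1+1)) ≤ 0 := by
        apply mul_nonpos_of_nonpos_of_nonneg (by linarith)
        exact mul_nonneg (div_nonneg (by norm_num) Dpos.le) (Fn _)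
      linarith

lemma key1 {f : ℝ → ℝ} (hf : Mz f) :
    (1 + q) / 2 * (1.4 * K f (-q) + 0.6 * K f q) - K f G ≤ 0.8234 * f G := by
  have q1 := q_lo
  have q2 := q_hi
  have h := key hf ((1 + q) / 2 * 1.4) ((1 + q) / 2 * 0.6) 0.775 0.04 (by linarith) (by linarith)
    (by norm_num) ?_ ?_ ?_
  · have := hf.nonneg G_mem
    linarith
  · rw [div_add_div _ _ (by linarith) (by linarith), div_le_iff₀ (by nlinarith)]
    nlinarith [q_sq]
  · have hx : 2 * (1 - q) / ((2 - q) * (4 - q)) ≤ 0.2113 := by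
      rw [div_le_iff₀ (by nlinarith)]; nlinarith
    have hy : 2 * (1 + q) / ((2 + q) * (4 + q)) ≤ 0.2651 := by
      rw [div_le_iff₀ (by nlinarith)]; nlinarith
    have hz : 0.276 ≤ 1 / (4 - q) := by
      rw [le_div_iff₀ (by nlinarith)]; nlinarith
    have hx' : (1 + q) / 2 * 1.4 * (2 * (1 - q) / ((2 - q) * (4 - q))) ≤ 0.9674 * 0.2113 := by
      apply mul_le_mul (by linarith) hx _ (by norm_num)
      apply div_nonneg (by linarith); nlinarith
    have hy' : (1 + q) / 2 * 0.6 * (2 * (1 + q) / ((2 + q) * (4 + q))) ≤ 0.4146 * 0.2651 := by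
      apply mul_le_mul (by linarith) hy _ (by norm_num)
      apply div_nonneg (by linarith); nlinarith
    linarith
  · nlinarith [q_sq]

lemma key2 {f : ℝ → ℝ} (hf : Mz f) : K f (-q) - K f G ≤ 0.8234 * f G := by
  have q1 := q_lo
  have q2 := q_hi
  have h := key hf 1 0 0.62 0 (by linarith) (by linarith) le_rfl ?_ ?_ ?_
  · have := hf.nonneg G_mem
    linarith
  · rw [zero_div, add_zero, div_le_iff₀ (by linarith)]; linarith
  · have hx : 2 * (1 - q) / ((2 - q) * (4 - q)) ≤ 0.2113 := by
      rw [div_le_iff₀ (by nlinarith)]; nlinarith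
    have hz : 0.276 ≤ 1 / (4 - q) := by
      rw [le_div_iff₀ (by nlinarith)]; nlinarith
    linarith
  · linarith

end OCF

namespace OCF

/-- real transition operator in terms of `K` -/
noncomputable def UR (f : ℝ → ℝ) (w : ℝ) : ℝ :=
  if w < q then (1 - w) / 2 * K f w + (1 + w) / 2 * K f (-w) else K f w

/-- step function at `g²` -/
noncomputable def S (w : ℝ) : ℝ := if w < q then 0 else 1

lemma S_mz : Mz S := by
  have q1 := q_lo
  refine ⟨?_, by simp only [S]; rw [if_pos (by linarith)]⟩
  intro x _ y _ hxy
  unfold S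
  split_ifs <;> first | linarith | norm_num

lemma UR_congr {f f' : ℝ → ℝ} (h : ∀ w ∈ Icc 0 G, f w = f' w) {w : ℝ} (hw : w ∈ Icc 0 G) :
    UR f w = UR f' w := by
  unfold UR
  rw [K_congr h (mem_I hw)]
  split_ifs with h1
  · rw [K_congr h (neg_mem_I hw.1 h1.le)]
  · rfl

lemma UR_comb {f1 f2 f3 : ℝ → ℝ} (h1 : Bd f1) (h2 : Bd f2) (h3 : Bd f3) (k a : ℝ) {w : ℝ}
    (hw : w ∈ Icc 0 G) :
    UR (fun w => k + f1 w - f2 w + a * f3 w) w = k + UR f1 w - UR f2 w + a * UR f3 w := by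
  unfold UR
  rw [K_comb h1 h2 h3 k a (mem_I hw)]
  split_ifs with h
  · rw [K_comb h1 h2 h3 k a (neg_mem_I hw.1 h.le)]; ring
  · rfl

/-- the decomposition property -/
def Good (h : ℝ → ℝ) (M : ℝ) : Prop :=
  ∃ (k a : ℝ) (h1 h2 : ℝ → ℝ), Mz h1 ∧ Mz h2 ∧
    (∀ w ∈ Icc 0 G, h w = k + h1 w - h2 w + a * S w) ∧ h1 G + h2 G + 0.4 * |a| ≤ M

lemma Mz.add {f g : ℝ → ℝ} (hf : Mz f) (hg : Mz g) : Mz (fun w => f w + g w) :=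
  ⟨fun x hx y hy hxy => add_le_add (hf.1 hx hy hxy) (hg.1 hx hy hxy), by simp [hf.2, hg.2]⟩

lemma Mz.smul {f : ℝ → ℝ} (hf : Mz f) {c : ℝ} (hc : 0 ≤ c) : Mz (fun w => c * f w) :=
  ⟨fun x hx y hy hxy => mul_le_mul_of_nonneg_left (hf.1 hx hy hxy) hc, by simp [hf.2]⟩

lemma Good.add {f g : ℝ → ℝ} {M N : ℝ} (hf : Good f M) (hg : Good g N) :
    Good (fun w => f w + g w) (M + N) := by
  obtain ⟨k, a, h1, h2, m1, m2, e, b⟩ := hf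
  obtain ⟨k', a', h1', h2', m1', m2', e', b'⟩ := hg
  refine ⟨k + k', a + a', _, _, m1.add m1', m2.add m2', ?_, ?_⟩
  · intro w hw; simp only [e w hw, e' w hw]; ring
  · have := abs_add_le a a'
    linarith

lemma Good.neg {f : ℝ → ℝ} {M : ℝ} (hf : Good f M) : Good (fun w => - f w) M := by
  obtain ⟨k, a, h1, h2, m1, m2, e, b⟩ := hf
  refine ⟨-k, -a, _, _, m2, m1, ?_, ?_⟩
  · intro w hw; simp only [e w hw]; ring
  · rw [abs_neg]; linarith

lemma Good.smul_nonneg {f : ℝ → ℝ} {M : ℝ} (hf : Good f M) {c : ℝ} (hc : 0 ≤ c) :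
    Good (fun w => c * f w) (c * M) := by
  obtain ⟨k, a, h1, h2, m1, m2, e, b⟩ := hf
  refine ⟨c * k, c * a, _, _, m1.smul hc, m2.smul hc, ?_, ?_⟩
  · intro w hw; simp only [e w hw]; ring
  · rw [abs_mul, abs_of_nonneg hc]
    have := mul_le_mul_of_nonneg_left b hc
    linarith

lemma Good.smul {f : ℝ → ℝ} {M : ℝ} (hf : Good f M) (c : ℝ) :
    Good (fun w => c * f w) (|c| * M) := by
  rcases le_total 0 c with hc | hc
  · rw [abs_of_nonneg hc]; exact hf.smul_nonneg hc
  · rw [abs_of_nonpos hc]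
    have := (hf.smul_nonneg (c := -c) (by linarith)).neg
    simpa using this

lemma Good.mono {f f' : ℝ → ℝ} {M N : ℝ} (hf : Good f M) (h : ∀ w ∈ Icc 0 G, f' w = f w)
    (hMN : M ≤ N) : Good f' N := by
  obtain ⟨k, a, h1, h2, m1, m2, e, b⟩ := hf
  exact ⟨k, a, h1, h2, m1, m2, fun w hw => by rw [h w hw, e w hw], b.trans hMN⟩

lemma Good.const (k : ℝ) : Good (fun _ => k) 0 :=
  ⟨k, 0, fun _ => 0, fun _ => 0, ⟨fun _ _ _ _ _ => le_rfl, rfl⟩, ⟨fun _ _ _ _ _ => le_rfl, rfl⟩,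
    fun w _ => by simp, by simp⟩

lemma Good.bd {f : ℝ → ℝ} {M : ℝ} (hf : Good f M) : Bd f := by
  obtain ⟨k, a, h1, h2, m1, m2, e, b⟩ := hf
  obtain ⟨M1, b1⟩ := m1.bd
  obtain ⟨M2, b2⟩ := m2.bd
  obtain ⟨M3, b3⟩ := S_mz.bd
  refine ⟨|k| + M1 + M2 + |a| * M3, fun w hw => ?_⟩
  rw [e w hw]
  have := abs_add_le (k + h1 w - h2 w) (a * S w)
  have := abs_sub (k + h1 w) (h2 w)
  have := abs_add_le k (h1 w)
  rw [abs_mul] at *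
  have := mul_le_mul_of_nonneg_left (b3 w hw) (abs_nonneg a)
  linarith [b1 w hw, b2 w hw]

lemma q_abc {f : ℝ → ℝ} (hf : Mz f) : K f q ≤ K f (-q) ∧ K f G ≤ K f q := by
  have q1 := q_lo
  refine ⟨K_anti hf (neg_mem_I (by linarith) le_rfl) (mem_I q_mem) (by linarith),
    K_anti hf (mem_I q_mem) (mem_I G_mem) q_mem.2⟩

lemma step_mono {f : ℝ → ℝ} (hf : Mz f) : Good (UR f) (0.8234 * f G) := by
  have q1 := q_lo
  have q2 := q_hi
  have hG := G_eq
  have hK := K_anti hf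
  set h1 : ℝ → ℝ := fun w =>
    (if w < q then (1 + w) / 2 * K f (-w) else (1 + q) / 2 * K f (-q)) - K f 0 / 2 with hh1
  set h2 : ℝ → ℝ := fun w =>
    (if w < q then - ((1 - w) / 2 * K f w)
      else - ((1 - q) / 2 * K f q) - K f w + K f q) + K f 0 / 2 with hh2
  have B : ∀ x y, 0 ≤ x → x ≤ y → y ≤ q → (1 + x) / 2 * K f (-x) ≤ (1 + y) / 2 * K f (-y) := by
    intro x y hx hxy hy
    apply mul_le_mul (by linarith)
    · exact hK (neg_mem_I (by linarith) hy) (neg_mem_I hx (by linarith)) (by linarith)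
    · exact K_nonneg hf (neg_mem_I hx (by linarith))
    · linarith
  have A : ∀ x y, 0 ≤ x → x ≤ y → y ≤ q → (1 - y) / 2 * K f y ≤ (1 - x) / 2 * K f x := by
    intro x y hx hxy hy
    apply mul_le_mul (by linarith)
    · exact hK ⟨by linarith, by linarith⟩ ⟨by linarith, by linarith⟩ (by linarith)
    · exact K_nonneg hf ⟨by linarith, by linarith⟩
    · linarith
  have m1 : Mz h1 := by
    constructor
    · intro x hx y hy hxy
      simp only [hh1]
      split_ifs with a b b
      · linarith [B x y hx.1 hxy b.le]
      · linarith [B x q hx.1 a.le le_rfl]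
      · exact absurd (lt_of_le_of_lt hxy b) a
      · exact le_rfl
    · simp only [hh1]; rw [if_pos (by linarith), neg_zero]; ring
  have m2 : Mz h2 := by
    constructor
    · intro x hx y hy hxy
      simp only [hh2]
      split_ifs with a b b
      · linarith [A x y hx.1 hxy b.le]
      · have := A x q hx.1 a.le le_rfl
        have := hK (mem_I q_mem) (mem_I hy) (not_lt.1 b)
        linarith
      · exact absurd (lt_of_le_of_lt hxy b) a
      · have := hK (mem_I hx) (mem_I hy) hxy
        linarith
    · simp only [hh2]; rw [if_pos (by linarith)]; ring
  refine ⟨K f 0, K f q - (1 - q) / 2 * K f q - (1 + q) / 2 * K f (-q), h1, h2, m1, m2, ?_, ?_⟩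
  · intro w hw
    simp only [hh1, hh2, UR, S]
    split_ifs <;> ring
  · have a1 := (q_abc hf).1
    have : (1 + q) / 2 * K f q ≤ (1 + q) / 2 * K f (-q) :=
      mul_le_mul_of_nonneg_left a1 (by linarith)
    rw [abs_of_nonpos (by linarith)]
    have hGq : ¬ G < q := by linarith
    simp only [hh1, hh2, if_neg hGq]
    have := key1 hf
    linarith

lemma osc_mono {f : ℝ → ℝ} (hf : Mz f) {w : ℝ} (hw : w ∈ Icc 0 G) :
    K f G ≤ UR f w ∧ UR f w ≤ K f (-q) := by
  have q1 := q_lo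
  have q2 := q_hi
  have hK := K_anti hf
  have hmq : -q ∈ Icc (-q) G := neg_mem_I (by linarith) le_rfl
  have h1 := hK (mem_I hw) (mem_I G_mem) hw.2
  have h2 := hK hmq (mem_I hw) (by linarith [hw.1])
  unfold UR
  split_ifs with h
  · have hmw := neg_mem_I hw.1 h.le
    have h3 := hK hmw (mem_I G_mem) hmw.2
    have h4 := hK hmq hmw hmw.1
    have w0 := hw.1
    constructor
    · have := mul_le_mul_of_nonneg_left h1 (show 0 ≤ (1 - w) / 2 by linarith)
      have := mul_le_mul_of_nonneg_left h3 (show 0 ≤ (1 + w) / 2 by linarith)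
      linarith
    · have := mul_le_mul_of_nonneg_left h2 (show 0 ≤ (1 - w) / 2 by linarith)
      have := mul_le_mul_of_nonneg_left h4 (show 0 ≤ (1 + w) / 2 by linarith)
      linarith
  · exact ⟨h1, h2⟩

lemma K_S {s : ℝ} (h1 : -q < s) (h2 : s ≤ G) : K S s = 1 / (2 + s) := by
  have q1 := q_lo
  have q2 := q_hi
  have hG := G_eq
  have hsq := q_sq
  unfold K
  rw [tsum_eq_single 0]
  · rw [cK_zero]
    have : S (pt s 0) = 1 := by
      unfold S pt
      rw [if_neg]
      rw [not_lt, le_div_iff₀ (by push_cast; linarith)]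
      push_cast; nlinarith
    rw [this, mul_one]
  · intro m hm
    have : S (pt s m) = 0 := by
      unfold S pt
      have : (1:ℝ) ≤ m := by exact_mod_cast Nat.one_le_iff_ne_zero.2 hm
      rw [if_pos]
      rw [div_lt_iff₀ (by linarith)]
      nlinarith
    rw [this, mul_zero]

lemma UR_S {w : ℝ} (hw : w ∈ Icc 0 G) :
    UR S w = if w < q then (2 + w ^ 2) / (4 - w ^ 2) else 1 / (2 + w) := by
  have q1 := q_lo
  have q2 := q_hi
  have hG := G_eq
  unfold UR
  obtain ⟨w0, w1⟩ := hw
  rw [K_S (by linarith) w1]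
  split_ifs with h
  · rw [K_S (by linarith) (by linarith)]
    have a1 : 2 + w ≠ 0 := by linarith
    have a2 : 2 + -w ≠ 0 := by linarith
    have a3 : 4 - w ^ 2 ≠ 0 := by nlinarith
    rw [eq_div_iff a3]
    have : 4 - w ^ 2 = (2 + w) * (2 + -w) := by ring
    rw [this]
    field_simp
    ring
  · rfl

lemma phi_mono {x y : ℝ} (hx : 0 ≤ x) (hxy : x ≤ y) (hy : y ≤ q) :
    (2 + x ^ 2) / (4 - x ^ 2) ≤ (2 + y ^ 2) / (4 - y ^ 2) := by
  have q2 := q_hi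
  have : x ^ 2 ≤ y ^ 2 := by nlinarith
  apply div_le_div₀ <;> nlinarith

lemma phi_q : (2 + q ^ 2) / (4 - q ^ 2) ≤ 0.557 ∧ 0.5 ≤ (2 + q ^ 2) / (4 - q ^ 2) := by
  have q1 := q_lo
  have q2 := q_hi
  constructor
  · rw [div_le_iff₀ (by nlinarith)]; nlinarith
  · rw [le_div_iff₀ (by nlinarith)]; nlinarith

lemma inv_q : 1 / (2 + q) ≤ 0.42 ∧ 0.419 ≤ 1 / (2 + q) := by
  have q1 := q_lo
  have q2 := q_hi
  constructor
  · rw [div_le_iff₀ (by nlinarith)]; nlinarith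
  · rw [le_div_iff₀ (by nlinarith)]; nlinarith

lemma inv_G : 0.276 ≤ 1 / (2 + G) := by
  have q1 := q_lo
  have q2 := q_hi
  have hG := G_eq
  rw [le_div_iff₀ (by linarith)]; linarith

lemma step_S : Good (UR S) (0.8234 * 0.4) := by
  have q1 := q_lo
  have q2 := q_hi
  have hG := G_eq
  set h1 : ℝ → ℝ := fun w =>
    (if w < q then (2 + w ^ 2) / (4 - w ^ 2) else (2 + q ^ 2) / (4 - q ^ 2)) - 1 / 2 with hh1
  set h2 : ℝ → ℝ := fun w => if w < q then 0 else 1 / (2 + q) - 1 / (2 + w) with hh2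
  have m1 : Mz h1 := by
    constructor
    · intro x hx y hy hxy
      simp only [hh1]
      split_ifs with a b b
      · linarith [phi_mono hx.1 hxy b.le]
      · linarith [phi_mono hx.1 a.le le_rfl]
      · exact absurd (lt_of_le_of_lt hxy b) a
      · exact le_rfl
    · simp only [hh1]; rw [if_pos (by linarith)]; norm_num
  have m2 : Mz h2 := by
    constructor
    · intro x hx y hy hxy
      simp only [hh2]
      split_ifs with a b b
      · exact le_rfl
      · have := one_div_le_one_div_of_le (show 0 < 2 + q by linarith)
          (show 2 + q ≤ 2 + y by linarith)
        linarith
      · exact absurd (lt_of_le_of_lt hxy b) a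
      · have := one_div_le_one_div_of_le (show 0 < 2 + x by linarith [hx.1])
          (show 2 + x ≤ 2 + y by linarith)
        linarith
    · simp only [hh2]; rw [if_pos (by linarith)]
  refine ⟨1 / 2, 1 / (2 + q) - (2 + q ^ 2) / (4 - q ^ 2), h1, h2, m1, m2, ?_, ?_⟩
  · intro w hw
    rw [UR_S hw]
    simp only [hh1, hh2, S]
    split_ifs <;> ring
  · have := phi_q
    have := inv_q
    have := inv_G
    rw [abs_of_nonpos (by linarith)]
    have hGq : ¬ G < q := by linarith
    simp only [hh1, hh2, if_neg hGq]
    linarith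

lemma osc_S {w : ℝ} (hw : w ∈ Icc 0 G) : 0.276 ≤ UR S w ∧ UR S w ≤ 0.557 := by
  have q1 := q_lo
  have q2 := q_hi
  have hG := G_eq
  have := phi_q
  have := inv_q
  have := inv_G
  rw [UR_S hw]
  split_ifs with h
  · have a := phi_mono le_rfl hw.1 h.le
    have b := phi_mono hw.1 h.le le_rfl
    norm_num at a
    constructor <;> linarith
  · have a := one_div_le_one_div_of_le (show 0 < 2 + q by linarith)
          (show 2 + q ≤ 2 + w by linarith)
    have b := one_div_le_one_div_of_le (show 0 < 2 + w by linarith [hw.1])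
          (show 2 + w ≤ 2 + G by linarith [hw.2])
    constructor <;> linarith

lemma Good.step {h : ℝ → ℝ} {M : ℝ} (hh : Good h M) : Good (UR h) (0.8234 * M) := by
  obtain ⟨k, a, h1, h2, m1, m2, e, b⟩ := hh
  refine ((((Good.const k).add (step_mono m1)).add (step_mono m2).neg).add
    (step_S.smul a)).mono (fun w hw => ?_) ?_
  · rw [UR_congr e hw, UR_comb m1.bd m2.bd S_mz.bd k a hw]; ring
  · linarith

lemma Good.osc {h : ℝ → ℝ} {M : ℝ} (hh : Good h M) {w w' : ℝ} (hw : w ∈ Icc 0 G)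
    (hw' : w' ∈ Icc 0 G) : UR h w - UR h w' ≤ 0.8234 * M := by
  obtain ⟨k, a, h1, h2, m1, m2, e, b⟩ := hh
  rw [UR_congr e hw, UR_comb m1.bd m2.bd S_mz.bd k a hw,
    UR_congr e hw', UR_comb m1.bd m2.bd S_mz.bd k a hw']
  have a1 := osc_mono m1 hw
  have a2 := osc_mono m1 hw'
  have a3 := osc_mono m2 hw
  have a4 := osc_mono m2 hw'
  have a5 := osc_S hw
  have a6 := osc_S hw'
  have k1 := key2 m1
  have k2 := key2 m2
  have : a * (UR S w - UR S w') ≤ |a| * 0.32936 := by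
    refine (le_abs_self _).trans ?_
    rw [abs_mul]
    apply mul_le_mul_of_nonneg_left _ (abs_nonneg a)
    rw [abs_le]; constructor <;> linarith
  linarith

lemma Good.iter {h : ℝ → ℝ} {M : ℝ} (hh : Good h M) (n : ℕ) : Good (UR^[n] h) (0.8234 ^ n * M) := by
  induction n with
  | zero => simpa using hh
  | succ n ih =>
    rw [Function.iterate_succ_apply', pow_succ']
    have := ih.step
    rwa [← mul_assoc] at this

end OCF

namespace OCF

/-- complex version of `K` -/
noncomputable def KC (f : ℝ → ℂ) (s : ℝ) : ℂ := ∑' m : ℕ, (cK s m : ℂ) * f (pt s m)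

lemma KC_hasSum {f : ℝ → ℂ} {M : ℝ} (hf : ∀ w ∈ Icc 0 G, ‖f w‖ ≤ M) {s : ℝ}
    (hs : s ∈ Icc (-q) G) :
    HasSum (fun m => (cK s m : ℂ) * f (pt s m)) (KC f s) ∧ ‖KC f s‖ ≤ M := by
  have hb : ∀ m, ‖(cK s m : ℂ) * f (pt s m)‖ ≤ cK s m * M := by
    intro m
    rw [norm_mul, Complex.norm_real, Real.norm_of_nonneg (cK_nonneg (I_gt hs) m)]
    exact mul_le_mul_of_nonneg_left (hf _ (pt_mem hs m)) (cK_nonneg (I_gt hs) m)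
  have h1 := (cK_hasSum (I_gt hs)).mul_right M
  rw [one_mul] at h1
  exact ⟨(Summable.of_norm_bounded h1.summable hb).hasSum, tsum_of_norm_bounded h1 hb⟩

lemma KC_re {f : ℝ → ℂ} {M : ℝ} (hf : ∀ w ∈ Icc 0 G, ‖f w‖ ≤ M) {s : ℝ}
    (hs : s ∈ Icc (-q) G) (z : ℂ) :
    (z * KC f s).re = K (fun x => (z * f x).re) s := by
  have h := Complex.hasSum_re ((KC_hasSum hf hs).1.mul_left z)
  unfold K
  rw [← h.tsum_eq]
  congr 1; ext m
  rw [← Complex.re_ofReal_mul]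
  congr 1; ring

lemma U_eq {f : ℝ → ℂ} {M : ℝ} (hf : ∀ w ∈ Icc 0 G, ‖f w‖ ≤ M) {w : ℝ} (hw : w ∈ Icc 0 G) :
    U f w = if w < q then ((1 - w) / 2 : ℝ) * KC f w + ((1 + w) / 2 : ℝ) * KC f (-w)
      else KC f w := by
  have q2 := q_hi
  have w0 := hw.1
  have e1 : ∀ m : ℕ, uF w 1 (2 * (m : ℤ) + 1) = pt w m := by
    intro m; simp [uF, pt]
  have hne : ∀ m : ℕ, ((2 * ((m + 1 : ℕ) : ℤ) + 1 : ℤ) = 1) = False := by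
    intro m; simp; omega
  split_ifs with h
  · have h' : w < gg ^ 2 := h
    have e2 : ∀ m : ℕ, uF w (-1) (2 * (m : ℤ) + 1) = pt (-w) m := by
      intro m; simp [uF, pt, h', sub_eq_add_neg]
    have p1 : ∀ m : ℕ, PF w 1 (2 * (m : ℤ) + 1) = (1 - w) / 2 * cK w m := by
      intro m
      rcases m with _ | m
      · simp only [PF, if_pos h', cK_zero]
        have : 1 + w ≠ 0 := by linarith
        have : 2 + w ≠ 0 := by linarith
        norm_num
        field_simp
        ring
      · have m0 : (0:ℝ) ≤ m := Nat.cast_nonneg m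
        simp only [PF, if_pos h', cK_succ, hne, if_false]
        push_cast
        have a1 : 2 * (m:ℝ) + 2 + w ≠ 0 := by linarith
        have a2 : 2 * (m:ℝ) + 4 + w ≠ 0 := by linarith
        rw [show 2 * ((m:ℝ) + 1) + 1 - 1 + 0 + 1 * w = 2 * m + 2 + w by ring,
          show 2 * ((m:ℝ) + 1) + 1 + 1 + 1 * w = 2 * m + 4 + w by ring]
        rw [div_mul_div_comm, div_eq_div_iff (by positivity) (by positivity)]
        ring
    have p2 : ∀ m : ℕ, PF w (-1) (2 * (m : ℤ) + 1) = (1 + w) / 2 * cK (-w) m := by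
      intro m
      rcases m with _ | m
      · simp only [PF, if_pos h', cK_zero]
        have : 1 + -w ≠ 0 := by linarith
        have : 2 + -w ≠ 0 := by linarith
        norm_num
        field_simp
        ring
      · have m0 : (0:ℝ) ≤ m := Nat.cast_nonneg m
        simp only [PF, if_pos h', cK_succ, hne, if_false]
        push_cast
        have a1 : 2 * (m:ℝ) + 2 + -w ≠ 0 := by linarith
        have a2 : 2 * (m:ℝ) + 4 + -w ≠ 0 := by linarith
        rw [show 2 * ((m:ℝ) + 1) + 1 - 1 + 0 + -1 * w = 2 * m + 2 + -w by ring,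
          show 2 * ((m:ℝ) + 1) + 1 + 1 + -1 * w = 2 * m + 4 + -w by ring]
        rw [div_mul_div_comm, div_eq_div_iff (by positivity) (by positivity)]
        ring
    have := ((KC_hasSum hf (mem_I hw)).1.mul_left (((1 - w) / 2 : ℝ) : ℂ)).add
      ((KC_hasSum hf (neg_mem_I w0 h.le)).1.mul_left (((1 + w) / 2 : ℝ) : ℂ))
    unfold U
    rw [← this.tsum_eq]
    congr 1; ext m
    rw [e1, e2, p1, p2]; push_cast; ring
  · have h' : ¬ w < gg ^ 2 := h
    have p1 : ∀ m : ℕ, PF w 1 (2 * (m : ℤ) + 1) = cK w m := by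
      intro m
      rcases m with _ | m
      · simp only [PF, if_neg h', cK_zero]
        have : 1 + w ≠ 0 := by linarith
        have : 2 + w ≠ 0 := by linarith
        norm_num
        field_simp
        try ring
      · have m0 : (0:ℝ) ≤ m := Nat.cast_nonneg m
        simp only [PF, if_neg h', cK_succ, hne, if_false, if_true]
        push_cast
        congr 1 <;> ring
    have p2 : ∀ m : ℕ, PF w (-1) (2 * (m : ℤ) + 1) = 0 := by
      intro m
      simp only [PF, if_neg h']
      norm_num
    unfold U KC
    congr 1; ext m
    rw [e1, p1, p2]; simp

lemma U_bd {f : ℝ → ℂ} {M : ℝ} (hf : ∀ w ∈ Icc 0 G, ‖f w‖ ≤ M) :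
    ∀ w ∈ Icc 0 G, ‖U f w‖ ≤ M := by
  intro w hw
  have q2 := q_hi
  have w0 := hw.1
  rw [U_eq hf hw]
  have h1 := (KC_hasSum hf (mem_I hw)).2
  split_ifs with h
  · have h2 := (KC_hasSum hf (neg_mem_I hw.1 h.le)).2
    refine (norm_add_le _ _).trans ?_
    rw [norm_mul, norm_mul, Complex.norm_real, Complex.norm_real,
      Real.norm_of_nonneg (by linarith), Real.norm_of_nonneg (by linarith)]
    have := mul_le_mul_of_nonneg_left h1 (show 0 ≤ (1 - w) / 2 by linarith)
    have := mul_le_mul_of_nonneg_left h2 (show 0 ≤ (1 + w) / 2 by linarith)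
    linarith
  · exact h1

lemma U_re {f : ℝ → ℂ} {M : ℝ} (hf : ∀ w ∈ Icc 0 G, ‖f w‖ ≤ M) (z : ℂ) {w : ℝ}
    (hw : w ∈ Icc 0 G) : (z * U f w).re = UR (fun x => (z * f x).re) w := by
  rw [U_eq hf hw]
  unfold UR
  split_ifs with h
  · rw [← KC_re hf (mem_I hw), ← KC_re hf (neg_mem_I hw.1 h.le), ← Complex.re_ofReal_mul,
      ← Complex.re_ofReal_mul, ← Complex.add_re]
    congr 1; ring
  · exact KC_re hf (mem_I hw) z

lemma Un_re {f : ℝ → ℂ} {M : ℝ} (hf : ∀ w ∈ Icc 0 G, ‖f w‖ ≤ M) (z : ℂ) (n : ℕ) :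
    (∀ w ∈ Icc 0 G, ‖U^[n] f w‖ ≤ M) ∧
    ∀ w ∈ Icc 0 G, (z * U^[n] f w).re = UR^[n] (fun x => (z * f x).re) w := by
  induction n with
  | zero => exact ⟨hf, fun w _ => rfl⟩
  | succ n ih =>
    simp only [Function.iterate_succ_apply']
    refine ⟨U_bd ih.1, fun w hw => ?_⟩
    rw [U_re ih.1 z hw]
    exact UR_congr ih.2 hw

end OCF

namespace OCF

lemma var_good {φ : ℝ → ℝ} (h : BoundedVariationOn φ (Icc 0 G)) :
    Good φ (eVariationOn φ (Icc 0 G)).toReal := by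
  have hl := h.locallyBoundedVariationOn
  have hm1 := variationOnFromTo.add_self_monotoneOn hl zero_mem
  have hm2 := variationOnFromTo.sub_self_monotoneOn hl zero_mem
  have h0 := variationOnFromTo.self φ (Icc 0 G) 0
  refine ⟨φ 0, 0, fun w => (variationOnFromTo φ (Icc 0 G) 0 w + φ w - φ 0) / 2,
    fun w => (variationOnFromTo φ (Icc 0 G) 0 w - φ w + φ 0) / 2, ⟨?_, ?_⟩, ⟨?_, ?_⟩, ?_, ?_⟩
  · intro x hx y hy hxy
    have := hm1 hx hy hxy
    simp only [Pi.add_apply] at this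
    simp only; linarith
  · simp only [h0]; ring
  · intro x hx y hy hxy
    have := hm2 hx hy hxy
    simp only [Pi.sub_apply] at this
    simp only; linarith
  · simp only [h0]; ring
  · intro w hw; ring
  · have := (le_abs_self _).trans (variationOnFromTo.abs_le_eVariationOn h (a := 0) (b := G))
    simp only [abs_zero]; linarith

/-- density -/
noncomputable def d (w : ℝ) : ℝ := if w < q then 1 / (1 + w) + 1 / (1 - w) else 1 / (1 + w)

lemma d_meas : Measurable d := by
  unfold d
  refine Measurable.ite measurableSet_Iio ?_ ?_ <;> fun_prop

lemma d_bd {w : ℝ} (hw : w ∈ Icc 0 G) : 0 ≤ d w ∧ d w ≤ 3 := by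
  have q2 := q_hi
  have w0 := hw.1
  have h1 : 0 ≤ 1 / (1 + w) ∧ 1 / (1 + w) ≤ 1 := by
    constructor
    · positivity
    · rw [div_le_iff₀ (by linarith)]; linarith
  unfold d
  split_ifs with h
  · have h2 : 0 ≤ 1 / (1 - w) ∧ 1 / (1 - w) ≤ 2 := by
      constructor
      · apply div_nonneg <;> linarith
      · rw [div_le_iff₀ (by linarith)]; linarith
    constructor <;> linarith
  · constructor <;> linarith

lemma Mz.aem {f : ℝ → ℝ} (hf : Mz f) : AEMeasurable f (volume.restrict (Icc 0 G)) :=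
  aemeasurable_restrict_of_monotoneOn measurableSet_Icc hf.1

lemma Good.aem {f : ℝ → ℝ} {M : ℝ} (hf : Good f M) :
    AEMeasurable f (volume.restrict (Icc 0 G)) := by
  obtain ⟨k, a, h1, h2, m1, m2, e, b⟩ := hf
  have : AEMeasurable (fun w => k + h1 w - h2 w + a * S w) (volume.restrict (Icc 0 G)) :=
    ((m1.aem.const_add k).sub m2.aem).add (S_mz.aem.const_mul a)
  refine this.congr ?_
  filter_upwards [ae_restrict_mem measurableSet_Icc] with w hw
  exact (e w hw).symm

lemma Good.intd {f : ℝ → ℝ} {M : ℝ} (hf : Good f M) :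
    IntegrableOn (fun w => d w * f w) (Icc 0 G) := by
  obtain ⟨B, hB⟩ := hf.bd
  refine Integrable.of_bound ?_ (3 * B) ?_
  · exact (d_meas.aemeasurable.mul hf.aem).aestronglyMeasurable
  · filter_upwards [ae_restrict_mem measurableSet_Icc] with w hw
    rw [norm_mul, Real.norm_of_nonneg (d_bd hw).1]
    exact mul_le_mul (d_bd hw).2 (hB w hw) (abs_nonneg _) (by norm_num)

lemma K_aem {f : ℝ → ℝ} (hf : Mz f) : AEMeasurable (K f) (volume.restrict (Icc (-q) G)) :=
  aemeasurable_restrict_of_antitoneOn measurableSet_Icc (K_anti hf)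

lemma K_bd {f : ℝ → ℝ} {B : ℝ} (hB : ∀ w ∈ Icc 0 G, |f w| ≤ B) {s : ℝ} (hs : s ∈ Icc (-q) G) :
    |K f s| ≤ B := by
  have h1 := (cK_hasSum (I_gt hs)).mul_right B
  rw [one_mul] at h1
  rw [← Real.norm_eq_abs]
  unfold K
  refine tsum_of_norm_bounded h1 fun m => ?_
  rw [norm_mul, Real.norm_of_nonneg (cK_nonneg (I_gt hs) m)]
  exact mul_le_mul_of_nonneg_left (hB _ (pt_mem hs m)) (cK_nonneg (I_gt hs) m)

lemma L_int {f : ℝ → ℝ} {M : ℝ} (hf : Good f M) :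
    IntegrableOn (fun s => K f s / (1 + s)) (Icc (-q) G) := by
  have q2 := q_hi
  obtain ⟨B, hB⟩ := hf.bd
  refine Integrable.of_bound ?_ (B * 2) ?_
  · obtain ⟨k, a, h1, h2, m1, m2, e, b⟩ := hf
    have : AEMeasurable (fun s => k + K h1 s - K h2 s + a * K S s)
        (volume.restrict (Icc (-q) G)) :=
      (((K_aem m1).const_add k).sub (K_aem m2)).add ((K_aem S_mz).const_mul a)
    have h' : AEMeasurable (K f) (volume.restrict (Icc (-q) G)) := by
      refine this.congr ?_
      filter_upwards [ae_restrict_mem measurableSet_Icc] with s hs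
      rw [K_congr e hs, K_comb m1.bd m2.bd S_mz.bd k a hs]
    exact (h'.div (measurable_const.add measurable_id).aemeasurable).aestronglyMeasurable
  · filter_upwards [ae_restrict_mem measurableSet_Icc] with s hs
    have hs1 := hs.1
    have : (0:ℝ) < 1 + s := by linarith
    rw [div_eq_mul_inv, norm_mul, Real.norm_of_nonneg (inv_nonneg.2 this.le)]
    refine mul_le_mul (K_bd hB hs) ?_ (inv_nonneg.2 this.le) ((abs_nonneg _).trans (K_bd hB hs))
    rw [inv_le_comm₀ this (by norm_num)]; norm_num; linarith

lemma d_pt {s : ℝ} (h1 : -q < s) (h2 : s ≤ G) (m : ℕ) :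
    cK s m / (1 + s) = (1 / (2 * m + 1 + s) ^ 2) * d (pt s m) := by
  have q1 := q_lo
  have q2 := q_hi
  have hG := G_eq
  have hsq := q_sq
  have a0 : 1 + s ≠ 0 := by linarith
  rcases m with _ | m
  · rw [cK_zero]
    unfold d pt
    rw [if_neg]
    · have a1 : 2 + s ≠ 0 := by linarith
      have a2 : 1 + 1 / (1 + s) = (2 + s) / (1 + s) := by field_simp; ring
      push_cast
      rw [mul_zero, zero_add, a2]
      field_simp
    · rw [not_lt, le_div_iff₀ (by push_cast; linarith)]
      push_cast; nlinarith
  · have m0 : (0:ℝ) ≤ m := Nat.cast_nonneg m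
    rw [cK_succ]
    unfold d pt
    rw [if_pos]
    · push_cast
      rw [show 2 * ((m:ℝ) + 1) + 1 + s = 2 * m + 3 + s by ring]
      have a1 : 2 * (m:ℝ) + 2 + s ≠ 0 := by linarith
      have a2 : 2 * (m:ℝ) + 3 + s ≠ 0 := by linarith
      have a3 : 2 * (m:ℝ) + 4 + s ≠ 0 := by linarith
      have e1 : 1 + 1 / (2 * (m:ℝ) + 3 + s) = (2 * m + 4 + s) / (2 * m + 3 + s) := by
        rw [eq_div_iff a2, add_mul, div_mul_cancel₀ _ a2]; ring
      have e2 : 1 - 1 / (2 * (m:ℝ) + 3 + s) = (2 * m + 2 + s) / (2 * m + 3 + s) := by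
        rw [eq_div_iff a2, sub_mul, div_mul_cancel₀ _ a2]; ring
      rw [e1, e2, one_div_div, one_div_div, div_add_div _ _ a3 a1, div_div, div_mul_div_comm,
        div_eq_div_iff (by positivity) (by positivity)]
      ring
    · push_cast
      rw [div_lt_iff₀ (by linarith)]
      nlinarith

lemma pt_inj {s s' : ℝ} (hs : s ∈ Ioc (-q) G) (hs' : s' ∈ Ioc (-q) G) {m m' : ℕ}
    (h : pt s m = pt s' m') : m = m' ∧ s = s' := by
  have hG := G_eq
  have e : 2 * (m:ℝ) + 1 + s = 2 * m' + 1 + s' := by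
    unfold pt at h
    rwa [one_div, one_div, inv_inj] at h
  obtain ⟨a, b⟩ := hs
  obtain ⟨a', b'⟩ := hs'
  have i1 : (m:ℝ) < m' + 1 := by linarith
  have i2 : (m':ℝ) < m + 1 := by linarith
  have i1' : m < m' + 1 := by exact_mod_cast i1
  have i2' : m' < m + 1 := by exact_mod_cast i2
  have : m = m' := by omega
  subst this
  exact ⟨rfl, by linarith⟩

lemma pt_deriv {s : ℝ} (hs : -1 < s) (m : ℕ) :
    HasDerivAt (fun s => pt s m) (-(1 / (2 * m + 1 + s) ^ 2)) s := by
  have m0 : (0:ℝ) ≤ m := Nat.cast_nonneg m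
  have h : HasDerivAt (fun s : ℝ => 2 * (m:ℝ) + 1 + s) 1 s := (hasDerivAt_id s).const_add _
  have := h.inv (by linarith)
  unfold pt
  simp only [one_div]
  exact this.congr_deriv (by rw [neg_div, one_div])

lemma pt_union : (⋃ m : ℕ, (fun s => pt s m) '' Ioc (-q) G) = Ioo 0 G := by
  have q1 := q_lo
  have q2 := q_hi
  have hG := G_eq
  ext y
  simp only [mem_iUnion, mem_image]
  constructor
  · rintro ⟨m, s, ⟨h1, h2⟩, rfl⟩
    have m0 : (0:ℝ) ≤ m := Nat.cast_nonneg m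
    constructor
    · unfold pt; apply div_pos <;> linarith
    · rw [← one_div_one_sub_q]; unfold pt
      apply one_div_lt_one_div_of_lt <;> linarith
  · rintro ⟨h1, h2⟩
    have hy : 1 - q < 1 / y := by
      rw [lt_one_div (by linarith) h1, one_div_one_sub_q]; exact h2
    have hx : 0 < (1 / y - 1 + q) / 2 := by linarith
    obtain ⟨m, hm⟩ : ∃ m : ℕ, ⌈(1 / y - 1 + q) / 2⌉₊ = m + 1 :=
      Nat.exists_eq_succ_of_ne_zero (Nat.ceil_pos.2 hx).ne'
    have c1 := Nat.le_ceil ((1 / y - 1 + q) / 2)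
    have c2 := Nat.ceil_lt_add_one hx.le
    rw [hm] at c1 c2
    push_cast at c1 c2
    refine ⟨m, 1 / y - (2 * m + 1), ⟨by linarith, by linarith⟩, ?_⟩
    unfold pt
    rw [add_sub_cancel, one_div_one_div]

lemma sum_int {f : ℝ → ℝ} {M : ℝ} (hf : Good f M) :
    ∫ s in Ioc (-q) G, K f s / (1 + s) = ∫ y in Ioo 0 G, d y * f y := by
  have hder : ∀ m : ℕ, ∀ s ∈ Ioc (-q) G, HasDerivWithinAt (fun s => pt s m)
      (-(1 / (2 * m + 1 + s) ^ 2)) (Ioc (-q) G) s := fun m s hs =>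
    (pt_deriv (I_gt (Ioc_subset_Icc_self hs)) m).hasDerivWithinAt
  have hinj : ∀ m : ℕ, InjOn (fun s => pt s m) (Ioc (-q) G) := fun m s hs s' hs' h =>
    (pt_inj hs hs' h).2
  have hmeas : ∀ m : ℕ, MeasurableSet ((fun s => pt s m) '' Ioc (-q) G) := fun m =>
    measurableSet_Ioc.image_of_continuousOn_injOn
      (fun s hs => (hder m s hs).continuousWithinAt) (hinj m)
  have hdisj : Pairwise (Function.onFun Disjoint (fun m : ℕ => (fun s => pt s m) '' Ioc (-q) G)) := by
    intro m m' hmm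
    rw [Function.onFun, Set.disjoint_left]
    rintro y ⟨s, hs, rfl⟩ ⟨s', hs', h⟩
    exact hmm (pt_inj hs' hs h).1.symm
  have hint : IntegrableOn (fun y => d y * f y) (⋃ m : ℕ, (fun s => pt s m) '' Ioc (-q) G) := by
    rw [pt_union]; exact hf.intd.mono_set Ioo_subset_Icc_self
  have hS := hasSum_integral_iUnion hmeas hdisj hint
  have hN := hasSum_integral_iUnion hmeas hdisj hint.norm
  rw [pt_union] at hS
  have hterm : ∀ (m : ℕ) (s : ℝ), s ∈ Ioc (-q) G →
      |(-(1 / (2 * (m:ℝ) + 1 + s) ^ 2))| • (d (pt s m) * f (pt s m))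
        = cK s m / (1 + s) * f (pt s m) := by
    intro m s hs
    rw [abs_neg, abs_of_nonneg (by positivity), smul_eq_mul, d_pt hs.1 hs.2]; ring
  have hFint : ∀ m : ℕ, IntegrableOn (fun s => cK s m / (1 + s) * f (pt s m)) (Ioc (-q) G) := by
    intro m
    have := (integrableOn_image_iff_integrableOn_abs_deriv_smul measurableSet_Ioc (hder m) (hinj m)
      (fun y => d y * f y)).1 (hint.mono_set (subset_iUnion (fun m : ℕ => (fun s => pt s m) '' Ioc (-q) G) m))
    exact this.congr_fun (fun s hs => hterm m s hs) measurableSet_Ioc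
  have hI : ∀ m : ℕ, ∫ y in (fun s => pt s m) '' Ioc (-q) G, d y * f y
      = ∫ s in Ioc (-q) G, cK s m / (1 + s) * f (pt s m) := by
    intro m
    rw [integral_image_eq_integral_abs_deriv_smul measurableSet_Ioc (hder m) (hinj m)]
    exact setIntegral_congr_fun measurableSet_Ioc (fun s hs => hterm m s hs)
  have hI' : ∀ m : ℕ, ∫ y in (fun s => pt s m) '' Ioc (-q) G, ‖d y * f y‖
      = ∫ s in Ioc (-q) G, ‖cK s m / (1 + s) * f (pt s m)‖ := by
    intro m
    rw [integral_image_eq_integral_abs_deriv_smul measurableSet_Ioc (hder m) (hinj m)]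
    refine setIntegral_congr_fun measurableSet_Ioc (fun s hs => ?_)
    rw [← hterm m s hs, norm_smul,
      Real.norm_of_nonneg (abs_nonneg (-(1 / (2 * (m:ℝ) + 1 + s) ^ 2))), smul_eq_mul]
  simp_rw [hI] at hS
  simp_rw [hI'] at hN
  have h2 := hasSum_integral_of_summable_integral_norm hFint hN.summable
  rw [hS.unique h2]
  refine setIntegral_congr_fun measurableSet_Ioc (fun s hs => ?_)
  simp only [K]
  rw [← tsum_div_const]
  congr 1; ext m; ring

lemma stat {f : ℝ → ℝ} {M : ℝ} (hf : Good f M) :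
    ∫ w in Icc 0 G, d w * UR f w = ∫ w in Icc 0 G, d w * f w := by
  have q1 := q_lo
  have q2 := q_hi
  have hG := G_eq
  have i1 := hf.step.intd
  have iL := L_int hf
  rw [integral_Icc_eq_integral_Ioo (f := fun w => d w * f w), ← sum_int hf,
    integral_Icc_eq_integral_Ioc, ← intervalIntegral.integral_of_le (by linarith),
    ← intervalIntegral.integral_of_le (by linarith)]
  have j : ∀ a b, -q ≤ a → a ≤ b → b ≤ G →
      IntervalIntegrable (fun s => K f s / (1 + s)) volume a b := by
    intro a b h1 h2 h3
    rw [intervalIntegrable_iff_integrableOn_Icc_of_le h2]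
    exact iL.mono_set (Icc_subset_Icc h1 h3)
  have k : ∀ a b, 0 ≤ a → a ≤ b → b ≤ G →
      IntervalIntegrable (fun s => d s * UR f s) volume a b := by
    intro a b h1 h2 h3
    rw [intervalIntegrable_iff_integrableOn_Icc_of_le h2]
    exact i1.mono_set (Icc_subset_Icc h1 h3)
  rw [← intervalIntegral.integral_add_adjacent_intervals (k 0 q (by linarith) (by linarith)
      (by linarith)) (k q G (by linarith) (by linarith) (by linarith)),
    ← intervalIntegral.integral_add_adjacent_intervals (j (-q) q (by linarith) (by linarith)
      (by linarith)) (j q G (by linarith) (by linarith) (by linarith)),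
    ← intervalIntegral.integral_add_adjacent_intervals (j (-q) 0 (by linarith) (by linarith)
      (by linarith)) (j 0 q (by linarith) (by linarith) (by linarith))]
  have e2 : ∫ x in q..G, d x * UR f x = ∫ x in q..G, K f x / (1 + x) := by
    apply intervalIntegral.integral_congr
    intro x hx
    rw [uIcc_of_le (by linarith)] at hx
    have : ¬ x < q := not_lt.2 hx.1
    simp only [d, UR, if_neg this]; ring
  have e1 : ∫ x in 0..q, d x * UR f x
      = ∫ x in 0..q, (K f (-x) / (1 + -x) + K f x / (1 + x)) := by
    rw [intervalIntegral.integral_of_le (by linarith), intervalIntegral.integral_of_le (by linarith),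
      integral_Ioc_eq_integral_Ioo, integral_Ioc_eq_integral_Ioo]
    refine setIntegral_congr_fun measurableSet_Ioo (fun x hx => ?_)
    have x0 := hx.1
    have x1 := hx.2
    simp only [d, UR, if_pos x1]
    have a1 : 1 + x ≠ 0 := by linarith
    have a2 : 1 - x ≠ 0 := by linarith
    rw [← sub_eq_add_neg]
    field_simp
    ring
  have jn : IntervalIntegrable (fun x => K f (-x) / (1 + -x)) volume 0 q := by
    have := (j (-q) 0 (by linarith) (by linarith) (by linarith)).symm.comp_sub_left 0
    simpa using this
  rw [e1, e2, intervalIntegral.integral_add jn (j 0 q (by linarith) (by linarith) (by linarith)),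
    intervalIntegral.integral_comp_neg (fun x => K f x / (1 + x)), neg_zero]

end OCF

namespace OCF

lemma logG_pos : 0 < Real.log G := by
  have q2 := q_hi
  have hG := G_eq
  exact Real.log_pos (by linarith)

lemma d_int : ∫ w in Icc 0 G, d w = 3 * Real.log G := by
  have q1 := q_lo
  have q2 := q_hi
  have hG := G_eq
  have hsq := q_sq
  have h := sum_int (Good.const 1)
  simp only [mul_one] at h
  rw [integral_Icc_eq_integral_Ioo, ← h]
  have e : ∫ s in Ioc (-q) G, K (fun _ => 1) s / (1 + s) = ∫ s in Ioc (-q) G, (1 + s)⁻¹ := by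
    refine setIntegral_congr_fun measurableSet_Ioc (fun s hs => ?_)
    have : K (fun _ => 1) s = 1 := by
      unfold K
      simp only [mul_one]
      exact (cK_hasSum (I_gt (Ioc_subset_Icc_self hs))).tsum_eq
    simp only [this, one_div]
  rw [e, ← intervalIntegral.integral_of_le (by linarith),
    intervalIntegral.integral_comp_add_left (fun x => x⁻¹),
    integral_inv_of_pos (by linarith) (by linarith)]
  have : (1 + G) / (1 + -q) = G ^ 3 := by
    rw [div_eq_iff (by linarith), hG]
    linear_combination -(q ^ 2 - 4 * q + 5) * hsq
  rw [this, Real.log_pow]; norm_num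

lemma dens_meas : Measurable (fun w => ENNReal.ofReal ((3 * Real.log G)⁻¹ *
      (if w < gg ^ 2 then 1 / (1 + w) + 1 / (1 - w) else 1 / (1 + w)))) :=
  (d_meas.const_mul _).ennreal_ofReal

lemma Qinf_int (φ : ℝ → ℝ) :
    ∫ w, φ w ∂Qinf = (3 * Real.log G)⁻¹ * ∫ w in Icc 0 G, d w * φ w := by
  have hl := logG_pos
  unfold Qinf
  rw [integral_withDensity_eq_integral_toReal_smul dens_meas
    (Eventually.of_forall fun _ => ENNReal.ofReal_lt_top), ← integral_const_mul]
  refine setIntegral_congr_fun measurableSet_Icc (fun w hw => ?_)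
  have h0 : 0 ≤ (3 * Real.log G)⁻¹ * d w := mul_nonneg (by positivity) (d_bd hw).1
  change (ENNReal.ofReal ((3 * Real.log G)⁻¹ * d w)).toReal • φ w = _
  rw [ENNReal.toReal_ofReal h0, smul_eq_mul, mul_assoc]

instance : IsProbabilityMeasure Qinf := by
  have hl := logG_pos
  constructor
  unfold Qinf
  rw [withDensity_apply _ MeasurableSet.univ, Measure.restrict_univ]
  change ∫⁻ w in Icc 0 G, ENNReal.ofReal ((3 * Real.log G)⁻¹ * d w) = 1
  rw [← ofReal_integral_eq_lintegral_ofReal, integral_const_mul, d_int, inv_mul_cancel₀,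
    ENNReal.ofReal_one]
  · positivity
  · have := (Good.intd (Good.const 1)).const_mul (3 * Real.log G)⁻¹
    simpa using this
  · filter_upwards [ae_restrict_mem measurableSet_Icc] with w hw
    exact mul_nonneg (by positivity) (d_bd hw).1

lemma Qinf_ac : Qinf ≪ volume.restrict (Icc 0 G) := withDensity_absolutelyContinuous _ _

lemma Qinf_mem : ∀ᵐ w ∂Qinf, w ∈ Icc 0 G := Qinf_ac.ae_le (ae_restrict_mem measurableSet_Icc)

lemma Good.int {φ : ℝ → ℝ} {M : ℝ} (h : Good φ M) : Integrable φ Qinf := by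
  obtain ⟨B, hB⟩ := h.bd
  refine Integrable.of_bound (h.aem.mono_ac Qinf_ac).aestronglyMeasurable B ?_
  filter_upwards [Qinf_mem] with w hw
  exact hB w hw

lemma stat_iter {φ : ℝ → ℝ} {M : ℝ} (h : Good φ M) (n : ℕ) :
    ∫ w, (UR^[n] φ) w ∂Qinf = ∫ w, φ w ∂Qinf := by
  induction n with
  | zero => rfl
  | succ n ih =>
    rw [← ih, Function.iterate_succ_apply', Qinf_int, Qinf_int, stat (h.iter n)]

lemma sub_int_le {ψ : ℝ → ℝ} {M w : ℝ} (hi : Integrable ψ Qinf)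
    (h : ∀ w' ∈ Icc 0 G, ψ w - ψ w' ≤ M) : ψ w - ∫ x, ψ x ∂Qinf ≤ M := by
  have : ∫ _x, (ψ w - M) ∂Qinf ≤ ∫ x, ψ x ∂Qinf := by
    refine integral_mono_ae (integrable_const _) hi ?_
    filter_upwards [Qinf_mem] with x hx
    have := h x hx
    linarith
  rw [integral_const] at this
  simp at this
  linarith

lemma re_lip {z : ℂ} (hz : ‖z‖ ≤ 1) : LipschitzWith 1 (fun x : ℂ => (z * x).re) := by
  refine LipschitzWith.of_dist_le_mul fun x y => ?_
  rw [NNReal.coe_one, one_mul, Real.dist_eq, dist_eq_norm, ← Complex.sub_re, ← mul_sub]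
  calc |(z * (x - y)).re| ≤ ‖z * (x - y)‖ := Complex.abs_re_le_norm _
    _ = ‖z‖ * ‖x - y‖ := norm_mul _ _
    _ ≤ 1 * ‖x - y‖ := by gcongr
    _ = _ := one_mul _

lemma re_var {f : ℝ → ℂ} {z : ℂ} (hz : ‖z‖ ≤ 1) :
    eVariationOn (fun x => (z * f x).re) (Icc 0 G) ≤ eVariationOn f (Icc 0 G) := by
  have := ((re_lip hz).lipschitzOnWith (s := univ)).comp_eVariationOn_le
    (g := f) (s := Icc 0 G) (mapsTo_univ _ _)
  rwa [ENNReal.coe_one, one_mul] at this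

lemma re_bv {f : ℝ → ℂ} (hf : BoundedVariationOn f (Icc 0 G)) {z : ℂ} (hz : ‖z‖ ≤ 1) :
    BoundedVariationOn (fun x => (z * f x).re) (Icc 0 G) :=
  ne_top_of_le_ne_top hf (re_var hz)

lemma f_int {f : ℝ → ℂ} (hf : BoundedVariationOn f (Icc 0 G)) : Integrable f Qinf := by
  have h1 := (var_good (re_bv hf (z := 1) (by simp))).int
  have h2 := (var_good (re_bv hf (z := -Complex.I) (by simp))).int
  simp only [one_mul] at h1
  have h3 := h1.ofReal (𝕜 := ℂ)
  have h4 := (h2.ofReal (𝕜 := ℂ)).mul_const Complex.I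
  refine (h3.add h4).congr (Eventually.of_forall fun x => ?_)
  simp [Complex.re_add_im]

lemma main_re {f : ℝ → ℂ} (hf : BoundedVariationOn f (Icc 0 G)) {z : ℂ} (hz : ‖z‖ ≤ 1) (n : ℕ)
    {w : ℝ} (hw : w ∈ Icc 0 G) :
    (z * (U^[n] f w - ∫ y, f y ∂Qinf)).re ≤ 0.8234 ^ n * (eVariationOn f (Icc 0 G)).toReal := by
  have hbd : ∀ w ∈ Icc 0 G, ‖f w‖ ≤ ‖f 0‖ + (eVariationOn f (Icc 0 G)).toReal := by
    intro w hw
    have h1 := hf.dist_le hw zero_mem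
    rw [dist_eq_norm] at h1
    have h2 := norm_le_norm_add_norm_sub' (f w) (f 0)
    linarith
  set φ : ℝ → ℝ := fun x => (z * f x).re with hφ
  have hb := re_bv hf hz
  have hg := var_good hb
  have hv : (eVariationOn φ (Icc 0 G)).toReal ≤ (eVariationOn f (Icc 0 G)).toReal :=
    ENNReal.toReal_mono hf (re_var hz)
  have e1 := (Un_re hbd z n).2 w hw
  have e2 : (z * ∫ y, f y ∂Qinf).re = ∫ y, φ y ∂Qinf := by
    rw [← integral_const_mul]
    exact (integral_re ((f_int hf).const_mul z)).symm
  rw [mul_sub, Complex.sub_re, e1, e2, ← stat_iter hg n]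
  refine (sub_int_le (M := 0.8234 ^ n * (eVariationOn φ (Icc 0 G)).toReal) (hg.iter n).int
    fun w' hw' => ?_).trans (mul_le_mul_of_nonneg_left hv (by positivity))
  cases n with
  | zero =>
    rw [pow_zero, one_mul]
    exact hb.sub_le hw hw'
  | succ n =>
    rw [Function.iterate_succ_apply', pow_succ', mul_assoc]
    exact (hg.iter n).osc hw hw'

end OCF


open OCF

/-- With `θ = 0.8234`, for every `n ∈ ℕ`, every `f : W → ℂ` of bounded variation and every
`w ∈ W`, `|Uⁿ f(w) - ∫_W f dQ∞| ≤ θⁿ var f`. -/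
theorem ocf_Un_convergence (n : ℕ) (f : ℝ → ℂ)
    (hf : BoundedVariationOn f (Set.Icc (0 : ℝ) G))
    (w : ℝ) (hw : w ∈ Set.Icc (0 : ℝ) G) :
    ‖U^[n] f w - ∫ y, f y ∂Qinf‖ ≤
      0.8234 ^ n * (eVariationOn f (Set.Icc (0 : ℝ) G)).toReal := by
  by_cases h0 : U^[n] f w - ∫ y, f y ∂Qinf = 0
  · rw [h0, norm_zero]; positivity
  set D := U^[n] f w - ∫ y, f y ∂Qinf with hD
  have hn : ‖D‖ ≠ 0 := norm_ne_zero_iff.2 h0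
  have hz : ‖(starRingEnd ℂ) D / (‖D‖ : ℂ)‖ ≤ 1 := by
    rw [norm_div, RCLike.norm_conj, Complex.norm_real, norm_norm, div_self hn]
  have := main_re hf hz n hw
  rw [← hD, div_mul_eq_mul_div, Complex.conj_mul', sq, mul_div_assoc, div_self
    (by exact_mod_cast hn), mul_one, Complex.ofReal_re] at this
  exact this
end

section
/- (Gauss–Kuzmin-type equation) For every n ≥ 1 and every x ∈ [0,1], H_{n+1}(x) = Σ_{(i,ε)} ε · (H_n(1/i) − H_n(1/(i+εx))), where the sum runs over all pairs (i,ε) with i an odd positive integer, ε ∈ {−1,1}, and i + ε > 1. -/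
open Real MeasureTheory Filter Set
open scoped ENNReal NNReal Classical

namespace OCF

/-- The odd Gauss map. -/
noncomputable def T (x : ℝ) : ℝ :=
  if x = 0 then 0
  else if Odd ⌊1 / x⌋ then Int.fract (1 / x) else 1 - Int.fract (1 / x)

/-- `eps x n` is `ε_n(x)`; by convention `ε_0(x) = 1`. -/
noncomputable def eps (x : ℝ) : ℕ → ℤ
  | 0 => 1
  | n + 1 => if Odd ⌊1 / (T^[n] x)⌋ then 1 else -1

/-- `a x n` is the `n`-th odd partial quotient `a_n(x)` (for `n ≥ 1`). -/
noncomputable def a (x : ℝ) : ℕ → ℤ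
  | 0 => 1
  | n + 1 => if Odd ⌊1 / (T^[n] x)⌋ then ⌊1 / (T^[n] x)⌋ else 1 + ⌊1 / (T^[n] x)⌋

/-- `r x n = r_n(x) = a_n(x) + ε_n(x) Tⁿ(x)` for `n ≥ 1`. -/
noncomputable def r (x : ℝ) (n : ℕ) : ℝ := (a x n : ℝ) + (eps x n : ℝ) * T^[n] x

/-- The distribution functions: `H μ 0 x = μ([0,x])` and, for `n ≥ 1`,
`H μ n x = μ({y ∈ (0,1) : y irrational, 1/r_{n+1}(y) < x})`. -/
noncomputable def H (μ : Measure ℝ) : ℕ → ℝ → ℝ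
  | 0 => fun x => (μ (Set.Icc 0 x)).toReal
  | n + 1 => fun x =>
      (μ {y | y ∈ Set.Ioo (0 : ℝ) 1 ∧ Irrational y ∧ 1 / r y (n + 2) < x}).toReal

/-- `h μ n x = H_n'(x) / ((x+G-1)⁻¹ - (x-G-1)⁻¹)`, the derivative being taken within `[0,1]`. -/
noncomputable def h (μ : Measure ℝ) (n : ℕ) (x : ℝ) : ℝ :=
  derivWithin (H μ n) (Set.Icc 0 1) x / ((x + G - 1)⁻¹ - (x - G - 1)⁻¹)

/-- `η = 4g Σ_{i odd} 1/((G+i) i (i+2))`. -/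
noncomputable def eta : ℝ :=
  4 * gg * ∑' m : ℕ, 1 / ((G + (2 * (m : ℝ) + 1)) * (2 * (m : ℝ) + 1) * (2 * (m : ℝ) + 3))

end OCF

open OCF

namespace OCF

lemma T_mem {z : ℝ} (hz : z ∈ Ioo (0:ℝ) 1) (hi : Irrational z) :
    T z ∈ Ioo (0:ℝ) 1 ∧ Irrational (T z) := by
  have hw : Irrational (1 / z) := by simpa using hi.inv
  have hf : Irrational (Int.fract (1 / z)) := by
    unfold Int.fract; exact hw.sub_intCast _
  have h0 : 0 < Int.fract (1 / z) := lt_of_le_of_ne (Int.fract_nonneg _) (by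
    intro h; exact hf.ne_zero h.symm)
  have h1 := Int.fract_lt_one (1 / z)
  unfold T
  rw [if_neg hz.1.ne']
  split_ifs
  · exact ⟨⟨h0, h1⟩, hf⟩
  · refine ⟨⟨by linarith, by linarith⟩, ?_⟩
    have := hf.intCast_sub 1
    simpa using this

lemma T_iter_mem {z : ℝ} (hz : z ∈ Ioo (0:ℝ) 1) (hi : Irrational z) (k : ℕ) :
    T^[k] z ∈ Ioo (0:ℝ) 1 ∧ Irrational (T^[k] z) := by
  induction k with
  | zero => exact ⟨hz, hi⟩
  | succ k ih => rw [Function.iterate_succ_apply']; exact T_mem ih.1 ih.2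

lemma one_div_r {y : ℝ} (hy : y ∈ Ioo (0:ℝ) 1) (hi : Irrational y) (k : ℕ) :
    1 / r y (k + 1) = T^[k] y := by
  have h := (T_iter_mem hy hi k).1.1
  have : r y (k + 1) = 1 / T^[k] y := by
    unfold r
    rw [Function.iterate_succ_apply']
    simp only [a, eps, T]
    rw [if_neg h.ne']
    split_ifs <;> simp only [Int.fract] <;> push_cast <;> ring
  rw [this, one_div_one_div]

lemma measurable_T : Measurable T := by
  unfold T
  have h1 : Measurable fun x : ℝ => 1 / x := by fun_prop
  refine Measurable.ite (measurableSet_singleton 0) measurable_const ?_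
  refine Measurable.ite ?_ (measurable_fract.comp h1) ((measurable_fract.comp h1).const_sub 1)
  exact (Int.measurable_floor.comp h1) (MeasurableSet.of_discrete (s := {n : ℤ | Odd n}))

lemma countable_preimage_T {C : Set ℝ} (hC : C.Countable) : (T ⁻¹' C).Countable := by
  have : T ⁻¹' C ⊆ {0} ∪ ((fun p : ℝ × ℤ => 1 / (p.1 + p.2)) '' (C ×ˢ univ) ∪
      (fun p : ℝ × ℤ => 1 / (1 - p.1 + p.2)) '' (C ×ˢ univ)) := by
    intro z hz
    by_cases h0 : z = 0
    · left; exact h0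
    right
    by_cases ho : Odd ⌊1 / z⌋
    · left
      refine ⟨(T z, ⌊1 / z⌋), ⟨hz, mem_univ _⟩, ?_⟩
      simp only [T, if_neg h0, if_pos ho, Int.fract_add_floor, one_div_one_div]
    · right
      refine ⟨(T z, ⌊1 / z⌋), ⟨hz, mem_univ _⟩, ?_⟩
      simp only [T, if_neg h0, if_neg ho, sub_sub_cancel, Int.fract_add_floor, one_div_one_div]
  refine Countable.mono this ?_
  have hP : (C ×ˢ (univ : Set ℤ)).Countable := hC.prod countable_univ
  exact (countable_singleton _).union ((hP.image _).union (hP.image _))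

lemma countable_preimage_iter {C : Set ℝ} (hC : C.Countable) (k : ℕ) :
    (T^[k] ⁻¹' C).Countable := by
  induction k generalizing C with
  | zero => simpa using hC
  | succ k ih =>
    rw [Function.iterate_succ', preimage_comp]
    exact ih (countable_preimage_T hC)

lemma mem_Ico_inv {z p q : ℝ} (hz : 0 < z) (hp : 0 < p) (hq : 0 < q) :
    z ∈ Ico (1 / p) (1 / q) ↔ q < 1 / z ∧ 1 / z ≤ p := by
  rw [mem_Ico, one_div_le hp hz, lt_one_div hz hq, and_comm]

/-- the m-th piece of the preimage -/
def B (x : ℝ) (m : ℕ) : Set ℝ :=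
  Ico (1 / (2 * (m : ℝ) + 1 + x)) (1 / (2 * (m : ℝ) + 1)) ∪
    Ico (1 / (2 * (m : ℝ) + 3)) (1 / (2 * (m : ℝ) + 3 - x))

lemma T_lt_iff {x z : ℝ} (hx : x ∈ Icc (0:ℝ) 1) (hz : z ∈ Ioo (0:ℝ) 1) (hi : Irrational z)
    (hne : ∀ m : ℕ, z ≠ 1 / (2 * (m : ℝ) + 1 + x)) :
    T z < x ↔ z ∈ ⋃ m, B x m := by
  obtain ⟨hx0, hx1⟩ := hx
  have hw : Irrational (1 / z) := by simpa using hi.inv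
  have hw1 : 1 < 1 / z := by rw [lt_one_div one_pos hz.1]; simpa using hz.2
  have hne' : ∀ m : ℕ, 1 / z ≠ 2 * (m : ℝ) + 1 + x := by
    intro m h
    apply hne m
    rw [← h, one_div_one_div]
  have key : z ∈ ⋃ m, B x m ↔ ∃ m : ℕ, (2 * (m:ℝ) + 1 < 1 / z ∧ 1 / z ≤ 2 * (m:ℝ) + 1 + x) ∨
      (2 * (m:ℝ) + 3 - x < 1 / z ∧ 1 / z ≤ 2 * (m:ℝ) + 3) := by
    rw [mem_iUnion]
    refine exists_congr fun m => ?_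
    have hm : (0:ℝ) ≤ m := Nat.cast_nonneg m
    unfold B
    rw [mem_union, mem_Ico_inv hz.1 (by linarith) (by linarith),
      mem_Ico_inv hz.1 (by linarith) (by linarith)]
  rw [key]
  unfold T
  rw [if_neg hz.1.ne']
  generalize 1 / z = w at *
  have hf1 : 1 ≤ ⌊w⌋ := by rw [Int.le_floor]; simpa using hw1.le
  constructor
  · intro h
    have hfw := Int.floor_add_fract w
    have hlt := Int.fract_lt_one w
    have hpos : 0 < Int.fract w := by
      rcases (Int.fract_nonneg w).lt_or_eq with h | h
      · exact h
      · exfalso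
        apply hw.ne_int ⌊w⌋
        linarith
    split_ifs at h with ho
    · obtain ⟨j, hj⟩ := ho
      lift j to ℕ using by omega
      refine ⟨j, Or.inl ?_⟩
      rw [hj] at hfw
      push_cast at hfw
      constructor <;> linarith
    · rw [Int.not_odd_iff_even] at ho
      obtain ⟨j, hj⟩ := ho
      obtain ⟨m, rfl⟩ : ∃ m : ℕ, j = m + 1 := ⟨(j - 1).toNat, by omega⟩
      refine ⟨m, Or.inr ?_⟩
      rw [hj] at hfw
      push_cast at hfw
      constructor <;> linarith
  · rintro ⟨m, ⟨h1, h2⟩ | ⟨h1, h2⟩⟩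
    · have h3 := lt_of_le_of_ne h2 (hne' m)
      have hfl : ⌊w⌋ = 2 * (m:ℤ) + 1 := by
        rw [Int.floor_eq_iff]; push_cast; constructor <;> linarith
      rw [if_pos (by rw [hfl]; exact ⟨m, rfl⟩), Int.fract, hfl]
      push_cast; linarith
    · have h3 : w < 2 * (m:ℝ) + 3 := lt_of_le_of_ne h2 (by
        have := hw.ne_int (2 * (m:ℤ) + 3)
        push_cast at this; exact this)
      have hfl : ⌊w⌋ = 2 * (m:ℤ) + 2 := by
        rw [Int.floor_eq_iff]; push_cast; constructor <;> linarith
      rw [if_neg (by rw [hfl, Int.not_odd_iff_even]; exact ⟨m + 1, by ring⟩), Int.fract, hfl]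
      push_cast; linarith

lemma real_Ico (ν : Measure ℝ) [IsFiniteMeasure ν] {p q : ℝ} (h : p ≤ q) :
    ν.real (Ico p q) = ν.real (Iio q) - ν.real (Iio p) := by
  have := measureReal_diff (μ := ν) (Iio_subset_Iio h) measurableSet_Iio
  rw [← this]
  congr 1
  ext z; simp [and_comm]

lemma B_subset {x : ℝ} (hx : x ∈ Icc (0:ℝ) 1) (m : ℕ) :
    B x m ⊆ Ico (1 / (2 * (m : ℝ) + 3)) (1 / (2 * (m : ℝ) + 1)) := by
  obtain ⟨hx0, hx1⟩ := hx
  have hm : (0:ℝ) ≤ m := Nat.cast_nonneg m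
  apply union_subset
  · apply Ico_subset_Ico_left
    apply one_div_le_one_div_of_le <;> linarith
  · apply Ico_subset_Ico_right
    apply one_div_le_one_div_of_le <;> linarith

lemma B_disjoint {x : ℝ} (hx : x ∈ Icc (0:ℝ) 1) : Pairwise (Function.onFun Disjoint (B x)) := by
  have main : ∀ m k : ℕ, m < k → Disjoint (B x m) (B x k) := by
    intro m k hmk
    rw [Set.disjoint_left]
    intro z h1 h2
    have h1 := (B_subset hx m h1).1
    have h2 := (B_subset hx k h2).2
    have hc : (m:ℝ) + 1 ≤ k := by exact_mod_cast hmk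
    have hm : (0:ℝ) ≤ m := Nat.cast_nonneg m
    have : 1 / (2 * (k:ℝ) + 1) ≤ 1 / (2 * (m:ℝ) + 3) := by
      apply one_div_le_one_div_of_le <;> linarith
    linarith
  intro m k hmk
  rcases lt_or_gt_of_ne hmk with h | h
  · exact main m k h
  · exact (main k m h).symm

lemma measurable_B (x : ℝ) (m : ℕ) : MeasurableSet (B x m) :=
  measurableSet_Ico.union measurableSet_Ico

lemma real_B (ν : Measure ℝ) [IsFiniteMeasure ν] {x : ℝ} (hx : x ∈ Icc (0:ℝ) 1) (m : ℕ) :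
    ν.real (B x m) =
      ((ν.real (Iio (1 / (2 * (m : ℝ) + 1))) - ν.real (Iio (1 / (2 * (m : ℝ) + 1 + x))))
        - (ν.real (Iio (1 / (2 * (m : ℝ) + 3))) - ν.real (Iio (1 / (2 * (m : ℝ) + 3 - x))))) := by
  obtain ⟨hx0, hx1⟩ := hx
  have hm : (0:ℝ) ≤ m := Nat.cast_nonneg m
  unfold B
  rw [measureReal_union _ measurableSet_Ico, real_Ico, real_Ico]
  · ring
  · apply one_div_le_one_div_of_le <;> linarith
  · apply one_div_le_one_div_of_le <;> linarith
  · rw [Set.disjoint_left]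
    intro z h1 h2
    have h1 := h1.1
    have h2 := h2.2
    have : 1 / (2 * (m:ℝ) + 3 - x) ≤ 1 / (2 * (m:ℝ) + 1 + x) := by
      apply one_div_le_one_div_of_le <;> linarith
    linarith

lemma main_aux (ν : Measure ℝ) [IsFiniteMeasure ν]
    (hν : ∀ᵐ z ∂ν, z ∈ Ioo (0:ℝ) 1 ∧ Irrational z) (hs : ∀ c : ℝ, ν {c} = 0)
    {x : ℝ} (hx : x ∈ Icc (0:ℝ) 1) :
    ν.real (T ⁻¹' Iio x) = ∑' m : ℕ,
      ((ν.real (Iio (1 / (2 * (m : ℝ) + 1))) - ν.real (Iio (1 / (2 * (m : ℝ) + 1 + x))))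
        - (ν.real (Iio (1 / (2 * (m : ℝ) + 3))) - ν.real (Iio (1 / (2 * (m : ℝ) + 3 - x))))) := by
  have hne : ∀ᵐ z ∂ν, ∀ m : ℕ, z ≠ 1 / (2 * (m : ℝ) + 1 + x) := by
    rw [ae_all_iff]
    intro m
    rw [ae_iff]
    simpa using hs _
  have hae : T ⁻¹' Iio x =ᵐ[ν] ⋃ m, B x m := by
    rw [eventuallyEq_set]
    filter_upwards [hν, hne] with z h1 h2
    exact T_lt_iff hx h1.1 h1.2 h2
  simp_rw [← real_B ν hx]
  rw [measureReal_congr hae, measureReal_def, measure_iUnion (B_disjoint hx) (measurable_B x),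
    ENNReal.tsum_toReal_eq (fun m => measure_ne_top ν _)]
  rfl

lemma measurableSet_irr : MeasurableSet {y : ℝ | y ∈ Ioo (0:ℝ) 1 ∧ Irrational y} := by
  apply measurableSet_Ioo.inter
  exact (countable_range _).measurableSet.compl

lemma H_eq (μ : Measure ℝ) (k : ℕ) (x : ℝ) :
    H μ (k + 1) x = ((μ.restrict {y : ℝ | y ∈ Ioo (0:ℝ) 1 ∧ Irrational y}).map T^[k + 1]).real
      (Iio x) := by
  have hT := measurable_T.iterate (k + 1)
  rw [measureReal_def, Measure.map_apply hT measurableSet_Iio,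
    Measure.restrict_apply (hT measurableSet_Iio)]
  simp only [H]
  congr 2
  ext y
  simp only [mem_setOf_eq, mem_inter_iff, mem_preimage, mem_Iio]
  constructor
  · rintro ⟨h1, h2, h3⟩
    rw [one_div_r h1 h2] at h3
    exact ⟨h3, h1, h2⟩
  · rintro ⟨h3, h1, h2⟩
    refine ⟨h1, h2, ?_⟩
    rwa [one_div_r h1 h2]

end OCF

/-- Gauss–Kuzmin-type equation: for every `n ≥ 1` and every `x ∈ [0,1]`,
`H_{n+1}(x) = Σ_{(i,ε)} ε (H_n(1/i) - H_n(1/(i+εx)))`, the sum running over odd positive `i`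
and `ε = ±1` with `i + ε > 1` (so `ε = 1` gives `i = 2m+1`, `ε = -1` gives `i = 2m+3`, `m ∈ ℕ`). -/
theorem ocf_gauss_kuzmin_equation (μ : Measure ℝ) [IsProbabilityMeasure μ] [NullSingletonClass μ]
    (hμ : μ (Set.Icc (0 : ℝ) 1)ᶜ = 0)
    (n : ℕ) (hn : 1 ≤ n) (x : ℝ) (hx : x ∈ Set.Icc (0 : ℝ) 1) :
    H μ (n + 1) x = ∑' m : ℕ,
      ((H μ n (1 / (2 * (m : ℝ) + 1)) - H μ n (1 / (2 * (m : ℝ) + 1 + x)))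
        - (H μ n (1 / (2 * (m : ℝ) + 3)) - H μ n (1 / (2 * (m : ℝ) + 3 - x)))) := by
  obtain ⟨k, rfl⟩ : ∃ k, n = k + 1 := ⟨n - 1, by omega⟩
  set S : Set ℝ := {y : ℝ | y ∈ Ioo (0:ℝ) 1 ∧ Irrational y} with hS
  have hT := measurable_T.iterate (k + 1)
  set ν := (μ.restrict S).map T^[k + 1] with hνd
  have h1 : H μ (k + 1 + 1) x = ν.real (T ⁻¹' Iio x) := by
    rw [H_eq, Function.iterate_succ', ← Measure.map_map measurable_T hT, measureReal_def,
      Measure.map_apply measurable_T measurableSet_Iio]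
    rfl
  rw [h1]
  simp_rw [H_eq μ k]
  refine main_aux ν ?_ ?_ hx
  · rw [hνd, ae_map_iff hT.aemeasurable measurableSet_irr, ae_restrict_iff' measurableSet_irr]
    exact ae_of_all _ fun y hy => T_iter_mem hy.1 hy.2 _
  · intro c
    rw [hνd, Measure.map_apply hT (measurableSet_singleton c)]
    have := (countable_preimage_iter (countable_singleton c) (k + 1)).measure_zero μ
    exact nonpos_iff_eq_zero.1 ((Measure.restrict_apply_le _ _).trans this.le)
end

section
/- Suppose that for some p ≥ 0 the derivative H_p' exists everywhere on [0,1] and is bounded. Then for every n ≥ p the derivative H_n' exists everywhere on [0,1], is bounded, and satisfies H_{n+1}'(x) = Σ_{(i,ε)} (1/(i+εx)²) · H_n'(1/(i+εx)) for all x ∈ [0,1], where the sum runs over all pairs (i,ε) with i an odd positive integer, ε ∈ {−1,1}, and i + ε > 1. -/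
open Real MeasureTheory Filter Set
open scoped ENNReal NNReal Classical

open OCF

namespace OCFaux

theorem hasDerivWithinAt_tsum_aux {f f' : ℕ → ℝ → ℝ} {s : Set ℝ} (hs : Convex ℝ s) {u : ℕ → ℝ}
    (hu : Summable u) (hf : ∀ n, ∀ x ∈ s, HasDerivWithinAt (f n) (f' n x) s x)
    (hb : ∀ n, ∀ x ∈ s, |f' n x| ≤ u n) {F : ℝ → ℝ}
    (hF : ∀ x ∈ s, HasSum (fun n => f n x) (F x)) {x : ℝ} (hx : x ∈ s) :
    HasDerivWithinAt F (∑' n, f' n x) s x := by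
  rw [hasDerivWithinAt_iff_tendsto_slope]
  have key : Tendsto (fun y => ∑' n, slope (f n) x y) (nhdsWithin x (s \ {x}))
      (nhds (∑' n, f' n x)) := by
    refine tendsto_tsum_of_dominated_convergence hu ?_ ?_
    · intro n
      exact (hasDerivWithinAt_iff_tendsto_slope.1 (hf n x hx))
    · filter_upwards [self_mem_nhdsWithin] with y hy n
      have h1 := hs.norm_image_sub_le_of_norm_hasDerivWithin_le (hf n) (fun z hz => hb n z hz)
        hx hy.1
      have hyx : y - x ≠ 0 := sub_ne_zero.2 hy.2
      rw [slope_def_field, norm_div, div_le_iff₀ (norm_pos_iff.2 hyx)]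
      exact h1
  refine key.congr' ?_
  filter_upwards [self_mem_nhdsWithin] with y hy
  rw [slope_def_field, ← ((hF y hy.1).sub (hF x hx)).tsum_eq, ← tsum_div_const]
  simp only [slope_def_field]

def S : Set ℝ := {y | y ∈ Set.Ioo (0 : ℝ) 1 ∧ Irrational y}

theorem measurableSet_S : MeasurableSet S := by
  have : MeasurableSet {y : ℝ | Irrational y} := by
    have h : MeasurableSet (Set.range ((↑) : ℚ → ℝ)) := (Set.countable_range _).measurableSet
    exact h.compl
  exact measurableSet_Ioo.inter this

theorem measurable_T : Measurable T := by
  unfold T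
  have h1 : Measurable (fun x : ℝ => 1 / x) := by fun_prop
  have h2 : Measurable (fun x : ℝ => Int.fract (1 / x)) := measurable_fract.comp h1
  refine Measurable.ite (measurableSet_singleton 0) measurable_const ?_
  refine Measurable.ite ?_ h2 (h2.const_sub 1)
  exact (Int.measurable_floor.comp h1) (MeasurableSet.of_discrete (s := {k : ℤ | Odd k}))

theorem T_mem {y : ℝ} (hy : y ∈ S) : T y ∈ S := by
  obtain ⟨⟨h0, h1⟩, hi⟩ := hy
  have hw : Irrational (1 / y) := by simpa using hi.inv
  have hfr : Irrational (Int.fract (1 / y)) := by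
    rw [Int.fract]; exact hw.sub_intCast _
  have hpos : 0 < Int.fract (1 / y) :=
    lt_of_le_of_ne (Int.fract_nonneg _) (fun h => hfr ⟨0, by simpa using h⟩)
  have hlt := Int.fract_lt_one (1 / y)
  unfold T
  rw [if_neg h0.ne']
  split_ifs
  · exact ⟨⟨hpos, hlt⟩, hfr⟩
  · exact ⟨⟨by linarith, by linarith⟩, by simpa using hfr.intCast_sub 1⟩

theorem T_iter_mem {y : ℝ} (hy : y ∈ S) (n : ℕ) : T^[n] y ∈ S := by
  induction n with
  | zero => exact hy
  | succ n ih => rw [Function.iterate_succ_apply']; exact T_mem ih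

theorem one_div_r {y : ℝ} (hy : y ∈ S) (n : ℕ) : 1 / r y (n + 1) = T^[n] y := by
  have h := T_iter_mem hy n
  have h0 : T^[n] y ≠ 0 := h.1.1.ne'
  have : r y (n + 1) = 1 / T^[n] y := by
    simp only [r, a, eps]
    rw [Function.iterate_succ_apply']
    generalize T^[n] y = z at h0 ⊢
    unfold T
    rw [if_neg h0]
    have := Int.floor_add_fract (1 / z)
    split_ifs <;> push_cast <;> linarith
  rw [this, one_div_one_div]

theorem countable_T (c : ℝ) : (T ⁻¹' {c}).Countable := by
  have : T ⁻¹' {c} ⊆ {0} ∪ ((Set.range fun k : ℤ => 1 / ((k : ℝ) + c)) ∪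
      (Set.range fun k : ℤ => 1 / ((k : ℝ) + (1 - c)))) := by
    intro y hy
    have hy : T y = c := hy
    by_cases h0 : y = 0
    · left; exact h0
    right
    unfold T at hy
    rw [if_neg h0] at hy
    have := Int.floor_add_fract (1 / y)
    split_ifs at hy
    · left
      refine ⟨⌊1 / y⌋, ?_⟩
      simp only
      rw [← hy, this, one_div_one_div]
    · right
      refine ⟨⌊1 / y⌋, ?_⟩
      simp only
      rw [← hy, sub_sub_cancel, this, one_div_one_div]
  exact ((Set.countable_singleton 0).union ((Set.countable_range _).union
    (Set.countable_range _))).mono this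

noncomputable def nu (μ : Measure ℝ) : ℕ → Measure ℝ
  | 0 => μ.restrict S
  | n + 1 => (nu μ n).map T

theorem nu_eq (μ : Measure ℝ) (n : ℕ) : nu μ n = (μ.restrict S).map (T^[n]) := by
  induction n with
  | zero => simp [nu]
  | succ n ih =>
    rw [nu, ih, Measure.map_map measurable_T (measurable_T.iterate n), Function.iterate_succ']

theorem nu_finite (μ : Measure ℝ) [IsProbabilityMeasure μ] (n : ℕ) : IsFiniteMeasure (nu μ n) := by
  rw [nu_eq]; infer_instance

theorem nu_ae (μ : Measure ℝ) (n : ℕ) : ∀ᵐ y ∂(nu μ n), y ∈ S := by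
  rw [nu_eq]
  refine (ae_map_iff (p := fun y => y ∈ S) (measurable_T.iterate n).aemeasurable measurableSet_S).2 ?_
  filter_upwards [ae_restrict_mem measurableSet_S] with y hy using T_iter_mem hy n

theorem nu_singleton (μ : Measure ℝ) [NullSingletonClass μ] (n : ℕ) (c : ℝ) :
    nu μ n {c} = 0 := by
  induction n generalizing c with
  | zero => exact le_antisymm ((Measure.restrict_apply_le _ _).trans (by simp)) bot_le
  | succ n ih =>
    rw [nu, Measure.map_apply measurable_T (measurableSet_singleton c)]
    rw [← Set.biUnion_of_singleton (T ⁻¹' {c})]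
    exact (measure_biUnion_null_iff (countable_T c)).2 fun i _ => ih i

theorem H_eq (μ : Measure ℝ) [IsProbabilityMeasure μ] [NullSingletonClass μ] (n : ℕ) {x : ℝ}
    (hx : x ∈ Icc (0 : ℝ) 1) : H μ n x = (nu μ n).real (Iio x) := by
  cases n with
  | zero =>
    simp only [H, nu, Measure.real]
    rw [Measure.restrict_apply measurableSet_Iio]
    congr 1
    apply measure_congr
    have hc : (Set.range ((↑) : ℚ → ℝ) ∪ {x}).Countable :=
      (Set.countable_range _).union (Set.countable_singleton x)
    have h0 : μ (Set.range ((↑) : ℚ → ℝ) ∪ {x}) = 0 := hc.measure_zero μ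
    filter_upwards [measure_eq_zero_iff_ae_notMem.1 h0] with y hy
    apply propext
    change y ∈ Icc 0 x ↔ y ∈ Iio x ∩ S
    simp only [mem_union, not_or, mem_singleton_iff] at hy
    have hi : Irrational y := hy.1
    constructor
    · rintro ⟨h1, h2⟩
      have h3 : y < x := lt_of_le_of_ne h2 hy.2
      exact ⟨h3, ⟨lt_of_le_of_ne h1 (fun h => hi ⟨0, by simpa using h⟩), h3.trans_le hx.2⟩, hi⟩
    · rintro ⟨h1, ⟨h2, _⟩, _⟩
      exact ⟨h2.le, le_of_lt h1⟩
  | succ n =>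
    simp only [H, Measure.real]
    rw [nu_eq, Measure.map_apply (measurable_T.iterate _) measurableSet_Iio,
      Measure.restrict_apply ((measurable_T.iterate _) measurableSet_Iio)]
    congr 2
    ext y
    constructor
    · rintro ⟨h1, h2, h3⟩
      rw [one_div_r ⟨h1, h2⟩] at h3
      exact ⟨h3, h1, h2⟩
    · rintro ⟨h3, h⟩
      refine ⟨h.1, h.2, ?_⟩
      rw [one_div_r h]
      exact h3

def A (x : ℝ) (m : ℕ) : Set ℝ := Ico (1 / (2 * (m : ℝ) + 1 + x)) (1 / (2 * (m : ℝ) + 1))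
def B (x : ℝ) (m : ℕ) : Set ℝ := Ico (1 / (2 * (m : ℝ) + 3)) (1 / (2 * (m : ℝ) + 3 - x))

theorem T_lt_iff {x z : ℝ} (hx : x ∈ Icc (0 : ℝ) 1) (hz : z ∈ S) (hne : T z ≠ x) :
    T z < x ↔ ∃ m, z ∈ A x m ∪ B x m := by
  obtain ⟨⟨h0, h1⟩, hi⟩ := hz
  obtain ⟨hx0, hx1⟩ := hx
  obtain ⟨w, hw⟩ : ∃ w, w = 1 / z := ⟨_, rfl⟩
  have hzw : z = 1 / w := by rw [hw, one_div_one_div]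
  have hwi : Irrational w := by rw [hw]; simpa using hi.inv
  have hw1 : 1 < w := by rw [hw]; exact one_lt_one_div h0 h1
  have hw0 : 0 < w := by linarith
  have hA : ∀ m : ℕ, z ∈ A x m ↔ 2 * (m : ℝ) + 1 < w ∧ w ≤ 2 * (m : ℝ) + 1 + x := by
    intro m
    rw [A, mem_Ico, hzw, one_div_le_one_div (by positivity) hw0,
      one_div_lt_one_div hw0 (by positivity)]
    tauto
  have hB : ∀ m : ℕ, z ∈ B x m ↔ 2 * (m : ℝ) + 3 - x < w ∧ w ≤ 2 * (m : ℝ) + 3 := by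
    intro m
    have : (0 : ℝ) ≤ m := m.cast_nonneg
    rw [B, mem_Ico, hzw, one_div_le_one_div (by positivity) hw0,
      one_div_lt_one_div hw0 (by linarith)]
    tauto
  have hfl := Int.floor_le w
  have hfl2 := Int.lt_floor_add_one w
  have hfr := Int.floor_add_fract w
  have hnn : ∀ k : ℕ, w ≠ k := fun k h => hwi ⟨k, by simpa using h.symm⟩
  have hT : T z = if Odd ⌊w⌋ then Int.fract w else 1 - Int.fract w := by
    unfold T; rw [if_neg h0.ne', hw]
  have hk : 1 ≤ ⌊w⌋ := Int.le_floor.2 (by simpa using hw1.le)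
  simp only [mem_union, hA, hB]
  constructor
  · intro h
    rw [hT] at h
    split_ifs at h with ho
    · obtain ⟨k, hk2⟩ := ho
      obtain ⟨m, rfl⟩ := Int.eq_ofNat_of_zero_le (show 0 ≤ k by omega)
      have hk3 : (⌊w⌋ : ℝ) = 2 * (m : ℝ) + 1 := by rw [hk2]; push_cast; ring
      refine ⟨m, Or.inl ⟨lt_of_le_of_ne (by linarith) ?_, by linarith⟩⟩
      intro h; exact hnn (2 * m + 1) (by push_cast; exact h.symm)
    · obtain ⟨k, hk2⟩ := Int.not_odd_iff_even.1 ho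
      obtain ⟨m, hm⟩ := Int.eq_ofNat_of_zero_le (show 0 ≤ k - 1 by omega)
      have hk4 : ⌊w⌋ = 2 * (m : ℤ) + 2 := by omega
      have hk3 : (⌊w⌋ : ℝ) = 2 * (m : ℝ) + 2 := by rw [hk4]; push_cast; ring
      exact ⟨m, Or.inr ⟨by linarith, by linarith⟩⟩
  · rintro ⟨m, h | h⟩
    · have h2 : w ≠ 2 * (m : ℝ) + 2 := by simpa using hnn (2 * m + 2)
      have h3 : w < 2 * (m : ℝ) + 2 := lt_of_le_of_ne (by linarith) h2
      have hf : ⌊w⌋ = 2 * (m : ℤ) + 1 := by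
        rw [Int.floor_eq_iff]; push_cast; constructor <;> linarith
      have hk3 : (⌊w⌋ : ℝ) = 2 * (m : ℝ) + 1 := by rw [hf]; push_cast; ring
      have ho : Odd ⌊w⌋ := ⟨m, hf⟩
      refine lt_of_le_of_ne ?_ hne
      rw [hT, if_pos ho]; linarith
    · have h2 : w ≠ 2 * (m : ℝ) + 3 := by simpa using hnn (2 * m + 3)
      have h3 : w < 2 * (m : ℝ) + 3 := lt_of_le_of_ne h.2 h2
      have hf : ⌊w⌋ = 2 * (m : ℤ) + 2 := by
        rw [Int.floor_eq_iff]; push_cast; constructor <;> linarith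
      have hk3 : (⌊w⌋ : ℝ) = 2 * (m : ℝ) + 2 := by rw [hf]; push_cast; ring
      have ho : ¬ Odd ⌊w⌋ := by rw [Int.not_odd_iff_even, hf]; exact ⟨m + 1, by ring⟩
      rw [hT, if_neg ho]; linarith

theorem real_Ico (ν : Measure ℝ) [IsFiniteMeasure ν] {a b : ℝ} (h : a ≤ b) :
    ν.real (Ico a b) = ν.real (Iio b) - ν.real (Iio a) := by
  rw [← measureReal_sdiff (Iio_subset_Iio h) measurableSet_Iio]
  congr 1
  ext z
  simp

theorem AB_subset {x : ℝ} (hx : x ∈ Icc (0 : ℝ) 1) (m : ℕ) :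
    A x m ∪ B x m ⊆ Ico (1 / (2 * (m : ℝ) + 3)) (1 / (2 * (m : ℝ) + 1)) := by
  obtain ⟨hx0, hx1⟩ := hx
  have : (0 : ℝ) ≤ m := m.cast_nonneg
  apply union_subset
  · exact Ico_subset_Ico_left (one_div_le_one_div_of_le (by linarith) (by linarith))
  · exact Ico_subset_Ico_right (one_div_le_one_div_of_le (by linarith) (by linarith))

theorem AB_disjoint {x : ℝ} (hx : x ∈ Icc (0 : ℝ) 1) :
    Pairwise (Function.onFun Disjoint fun m => A x m ∪ B x m) := by
  apply (pairwise_disjoint_on _).2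
  intro m n hmn
  refine Disjoint.mono (AB_subset hx m) (AB_subset hx n) ?_
  rw [Set.disjoint_left]
  intro z h1 h2
  have h3 : (1 : ℝ) / (2 * (n : ℝ) + 1) ≤ 1 / (2 * (m : ℝ) + 3) := by
    apply one_div_le_one_div_of_le (by positivity)
    have : (m : ℝ) + 1 ≤ n := by exact_mod_cast hmn
    linarith
  linarith [h1.1, h2.2]

theorem H_hasSum (μ : Measure ℝ) [IsProbabilityMeasure μ] [NullSingletonClass μ] (n : ℕ) {x : ℝ}
    (hx : x ∈ Icc (0 : ℝ) 1) :
    HasSum (fun m : ℕ => (H μ n (1 / (2 * (m : ℝ) + 1)) - H μ n (1 / (2 * (m : ℝ) + 1 + x))) +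
      (H μ n (1 / (2 * (m : ℝ) + 3 - x)) - H μ n (1 / (2 * (m : ℝ) + 3)))) (H μ (n + 1) x) := by
  have hfin := nu_finite μ n
  have hx' := hx
  obtain ⟨hx0, hx1⟩ := hx
  have hI : ∀ t : ℝ, 1 ≤ t → 1 / t ∈ Icc (0 : ℝ) 1 := fun t ht =>
    ⟨by positivity, by rw [div_le_one (by linarith)]; exact ht⟩
  have hm : ∀ m, MeasurableSet (A x m ∪ B x m) := fun m => measurableSet_Ico.union measurableSet_Ico
  have key : H μ (n + 1) x = (nu μ n).real (⋃ m, (A x m ∪ B x m)) := by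
    rw [H_eq μ (n + 1) hx', nu, Measure.real, Measure.map_apply measurable_T measurableSet_Iio,
      Measure.real]
    congr 1
    apply measure_congr
    have hz : nu μ n (T ⁻¹' {x}) = 0 := by
      have := nu_singleton μ (n + 1) x
      rwa [nu, Measure.map_apply measurable_T (measurableSet_singleton x)] at this
    filter_upwards [nu_ae μ n, measure_eq_zero_iff_ae_notMem.1 hz] with z hz1 hz2
    apply propext
    change T z < x ↔ z ∈ ⋃ m, (A x m ∪ B x m)
    rw [mem_iUnion]
    exact T_lt_iff hx' hz1 hz2
  rw [key]
  have hs : HasSum (fun m => (nu μ n).real (A x m ∪ B x m))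
      ((nu μ n).real (⋃ m, (A x m ∪ B x m))) := by
    have h1 : (nu μ n) (⋃ m, (A x m ∪ B x m)) = ∑' m, nu μ n (A x m ∪ B x m) :=
      measure_iUnion (AB_disjoint hx') hm
    have h2 : ∑' m, nu μ n (A x m ∪ B x m) ≠ ⊤ := by rw [← h1]; exact measure_ne_top _ _
    rw [Measure.real, h1, ENNReal.tsum_toReal_eq (fun m => measure_ne_top _ _)]
    exact (ENNReal.summable_toReal h2).hasSum
  convert hs using 2 with m
  have hmn : (0 : ℝ) ≤ m := m.cast_nonneg
  rw [measureReal_union _ (show MeasurableSet (B x m) from measurableSet_Ico)]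
  · rw [A, B, real_Ico _ (one_div_le_one_div_of_le (by linarith) (by linarith)),
      real_Ico _ (one_div_le_one_div_of_le (by linarith) (by linarith)),
      H_eq μ n (hI _ (by linarith)), H_eq μ n (hI _ (by linarith)),
      H_eq μ n (hI _ (by linarith)), H_eq μ n (hI _ (by linarith))]
  · rw [Set.disjoint_left]
    intro z h1 h2
    have h3 : (1 : ℝ) / (2 * (m : ℝ) + 3 - x) ≤ 1 / (2 * (m : ℝ) + 1 + x) :=
      one_div_le_one_div_of_le (by linarith) (by linarith)
    linarith [h1.1, h2.2]

noncomputable def dterm (D : ℝ → ℝ) (m : ℕ) (x : ℝ) : ℝ :=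
  (1 / (2 * (m : ℝ) + 1 + x) ^ 2) * D (1 / (2 * (m : ℝ) + 1 + x))
    + (1 / (2 * (m : ℝ) + 3 - x) ^ 2) * D (1 / (2 * (m : ℝ) + 3 - x))

theorem step (μ : Measure ℝ) [IsProbabilityMeasure μ] [NullSingletonClass μ] (n : ℕ)
    (hdiff : ∀ x ∈ Set.Icc (0 : ℝ) 1, DifferentiableWithinAt ℝ (H μ n) (Set.Icc 0 1) x)
    (C : ℝ) (hbd : ∀ x ∈ Set.Icc (0 : ℝ) 1, |derivWithin (H μ n) (Set.Icc 0 1) x| ≤ C) :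
    ∃ C' : ℝ, ∀ x ∈ Set.Icc (0 : ℝ) 1,
      HasDerivWithinAt (H μ (n + 1)) (∑' m, dterm (derivWithin (H μ n) (Set.Icc 0 1)) m x)
        (Icc 0 1) x ∧ |∑' m, dterm (derivWithin (H μ n) (Set.Icc 0 1)) m x| ≤ C' := by
  set D := derivWithin (H μ n) (Set.Icc 0 1) with hD
  have hC : 0 ≤ C := (abs_nonneg _).trans (hbd 0 (by simp))
  have hI : ∀ t : ℝ, 1 ≤ t → 1 / t ∈ Icc (0 : ℝ) 1 := fun t ht =>
    ⟨by positivity, by rw [div_le_one (by linarith)]; exact ht⟩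
  have hu : Summable fun m : ℕ => 2 * C * (1 / ((m : ℝ) + 1) ^ 2) := by
    apply Summable.mul_left
    have := (summable_nat_add_iff 1).2 (Real.summable_one_div_nat_pow.2 (one_lt_two))
    simpa using this
  have hb : ∀ m, ∀ x ∈ Icc (0 : ℝ) 1, |dterm D m x| ≤ 2 * C * (1 / ((m : ℝ) + 1) ^ 2) := by
    rintro m x ⟨hx0, hx1⟩
    have hmn : (0 : ℝ) ≤ m := m.cast_nonneg
    have aux : ∀ t : ℝ, (m : ℝ) + 1 ≤ t → |(1 / t ^ 2) * D (1 / t)| ≤ C * (1 / ((m : ℝ) + 1) ^ 2) := by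
      intro t ht
      rw [abs_mul, abs_of_nonneg (by positivity), mul_comm]
      apply mul_le_mul (hbd _ (hI t (by linarith))) _ (by positivity) hC
      apply one_div_le_one_div_of_le (by positivity)
      gcongr
    unfold dterm
    refine (abs_add_le _ _).trans ?_
    linarith [aux (2 * (m : ℝ) + 1 + x) (by linarith), aux (2 * (m : ℝ) + 3 - x) (by linarith)]
  refine ⟨∑' m : ℕ, 2 * C * (1 / ((m : ℝ) + 1) ^ 2), fun x hx => ⟨?_, ?_⟩⟩
  · refine hasDerivWithinAt_tsum_aux (f := fun (m : ℕ) x =>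
      (H μ n (1 / (2 * (m : ℝ) + 1)) - H μ n (1 / (2 * (m : ℝ) + 1 + x))) +
      (H μ n (1 / (2 * (m : ℝ) + 3 - x)) - H μ n (1 / (2 * (m : ℝ) + 3))))
      (convex_Icc 0 1) hu ?_ hb (fun x hx => H_hasSum μ n hx) hx
    intro m y hy
    have hmn : (0 : ℝ) ≤ m := m.cast_nonneg
    have e1 : HasDerivWithinAt (fun x : ℝ => 1 / (2 * (m : ℝ) + 1 + x))
        (-1 / (2 * (m : ℝ) + 1 + y) ^ 2) (Icc 0 1) y := by
      simpa [one_div] using ((hasDerivWithinAt_id y (Icc 0 1)).const_add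
        (2 * (m : ℝ) + 1)).fun_inv (by simp only [id]; linarith [hy.1])
    have e2 : HasDerivWithinAt (fun x : ℝ => 1 / (2 * (m : ℝ) + 3 - x))
        (1 / (2 * (m : ℝ) + 3 - y) ^ 2) (Icc 0 1) y := by
      simpa [one_div] using ((hasDerivWithinAt_id y (Icc 0 1)).const_sub
        (2 * (m : ℝ) + 3)).fun_inv (by simp only [id]; linarith [hy.2])
    have c1 := (hdiff _ (hI (2 * (m : ℝ) + 1 + y) (by linarith [hy.1]))).hasDerivWithinAt.comp y e1
      (fun t ht => hI _ (by linarith [ht.1]))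
    have c2 := (hdiff _ (hI (2 * (m : ℝ) + 3 - y) (by linarith [hy.2]))).hasDerivWithinAt.comp y e2
      (fun t ht => hI _ (by linarith [ht.2]))
    have c3 := (c1.const_sub (H μ n (1 / (2 * (m : ℝ) + 1)))).add
      (c2.sub_const (H μ n (1 / (2 * (m : ℝ) + 3))))
    refine c3.congr_deriv ?_
    unfold dterm
    rw [← hD]
    ring
  · have hs : Summable fun m => |dterm D m x| :=
      Summable.of_nonneg_of_le (fun _ => abs_nonneg _) (fun m => hb m x hx) hu
    have h1 : |∑' m, dterm D m x| ≤ ∑' m, |dterm D m x| := by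
      simpa [Real.norm_eq_abs] using norm_tsum_le_tsum_norm (f := fun m => dterm D m x) hs
    exact h1.trans (hs.tsum_le_tsum (fun m => hb m x hx) hu)

end OCFaux

/-- If for some `p ≥ 0` the derivative `H_p'` exists everywhere on `[0,1]` and is bounded, then
for every `n ≥ p` the derivative `H_n'` exists everywhere on `[0,1]`, is bounded, and satisfies
`H_{n+1}'(x) = Σ_{(i,ε)} (i+εx)⁻² H_n'(1/(i+εx))`, the sum running over odd positive `i` and
`ε = ±1` with `i + ε > 1`. -/
theorem ocf_gauss_kuzmin_derivative (μ : Measure ℝ) [IsProbabilityMeasure μ] [NullSingletonClass μ]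
    (hμ : μ (Set.Icc (0 : ℝ) 1)ᶜ = 0) (p : ℕ)
    (hdiff : ∀ x ∈ Set.Icc (0 : ℝ) 1, DifferentiableWithinAt ℝ (H μ p) (Set.Icc 0 1) x)
    (hbd : ∃ C : ℝ, ∀ x ∈ Set.Icc (0 : ℝ) 1, |derivWithin (H μ p) (Set.Icc 0 1) x| ≤ C) :
    ∀ n : ℕ, p ≤ n →
      (∀ x ∈ Set.Icc (0 : ℝ) 1, DifferentiableWithinAt ℝ (H μ n) (Set.Icc 0 1) x) ∧
      (∃ C : ℝ, ∀ x ∈ Set.Icc (0 : ℝ) 1, |derivWithin (H μ n) (Set.Icc 0 1) x| ≤ C) ∧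
      ∀ x ∈ Set.Icc (0 : ℝ) 1,
        derivWithin (H μ (n + 1)) (Set.Icc 0 1) x =
          ∑' m : ℕ,
            ((1 / (2 * (m : ℝ) + 1 + x) ^ 2) *
                derivWithin (H μ n) (Set.Icc 0 1) (1 / (2 * (m : ℝ) + 1 + x))
              + (1 / (2 * (m : ℝ) + 3 - x) ^ 2) *
                derivWithin (H μ n) (Set.Icc 0 1) (1 / (2 * (m : ℝ) + 3 - x))) := by
  have main : ∀ n : ℕ, p ≤ n →
      (∀ x ∈ Set.Icc (0 : ℝ) 1, DifferentiableWithinAt ℝ (H μ n) (Set.Icc 0 1) x) ∧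
      (∃ C : ℝ, ∀ x ∈ Set.Icc (0 : ℝ) 1, |derivWithin (H μ n) (Set.Icc 0 1) x| ≤ C) := by
    intro n hn
    induction n, hn using Nat.le_induction with
    | base => exact ⟨hdiff, hbd⟩
    | succ n hn ih =>
      obtain ⟨h1, C, h2⟩ := ih
      obtain ⟨C', h3⟩ := OCFaux.step μ n h1 C h2
      refine ⟨fun x hx => (h3 x hx).1.differentiableWithinAt, C', fun x hx => ?_⟩
      rw [(h3 x hx).1.derivWithin (uniqueDiffOn_Icc zero_lt_one x hx)]
      exact (h3 x hx).2
  intro n hn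
  obtain ⟨h1, C, h2⟩ := main n hn
  refine ⟨h1, ⟨C, h2⟩, fun x hx => ?_⟩
  obtain ⟨C', h3⟩ := OCFaux.step μ n h1 C h2
  exact (h3 x hx).1.derivWithin (uniqueDiffOn_Icc zero_lt_one x hx)
end
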